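/- arXiv:2004.14929 — 8 statements merged into one kernel-verified Lean document; each statement's English description precedes it below -/
import Mathlib

section
/- For every integer d ≥ 1 there exist d+1 dyadic grids (i.e., n-adic grids with n = 2) 𝒟_1, …, 𝒟_{d+1} in ℝ^d and a constant C_d > 0 such that every Euclidean ball B ⊆ ℝ^d is contained in some cube Q ∈ 𝒟_1 ∪ ⋯ ∪ 𝒟_{d+1} with diam(Q) ≤ C_d · diam(B). -/
/-!
The grids are the shifted dyadic grids whose cubes of sidelength `2 ^ k` have their corners in
`2 ^ k (ℤ + s k) ^ d`. These families are nested across scales as soon as `2 s (k+1) - s k` is always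
an integer (`isNAdicGridE_shiftedGrid`). Put `p = 2 d + 1`, an odd number, and take in the `j`-th grid
`s k = j a_k / p`, where `a_k` represents `2 ^ (-k)` in `ZMod p` and is therefore a unit modulo `p`.

For `0 ≤ j, j' ≤ d` distinct, `(j - j') a_k` is not divisible by `p`, so that the endpoint sets
`2 ^ k (ℤ + j a_k / p)` and `2 ^ k (ℤ + j' a_k / p)` on the line lie at distance at least `2 ^ k / p`
from one another (`shift_separated`). Given a ball of radius `r`, choose `k` with
`2 ^ (k-1) ≤ 2 p r < 2 ^ k`. Each of the `d` coordinate projections of the ball is an interval of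
length `2 r < 2 ^ k / p`, so it meets the endpoint set of at most one `j`. As there are `d + 1`
indices and only `d` coordinates, some `j` is met in no coordinate, and for this `j` the cube of
sidelength `2 ^ k` around the centre contains the ball.
-/

/-- The half-open cube `[x₁, x₁+ℓ) × ⋯ × [x_d, x_d+ℓ)` in Euclidean space. -/
def HalfOpenCubeE (d : ℕ) (x : EuclideanSpace ℝ (Fin d)) (ℓ : ℝ) :
    Set (EuclideanSpace ℝ (Fin d)) :=
  {y | ∀ i, x i ≤ y i ∧ y i < x i + ℓ}

/-- `G` is an `n`-adic grid in `ℝ^d` (Euclidean model): every member is a half-open cube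
of sidelength `n^k` for some `k : ℤ`, any two members intersect trivially, and for each
`k : ℤ` the members of sidelength `n^k` form a partition of the space. -/
def IsNAdicGridE (n d : ℕ) (G : Set (Set (EuclideanSpace ℝ (Fin d)))) : Prop :=
  (∀ Q ∈ G, ∃ (x : EuclideanSpace ℝ (Fin d)) (k : ℤ), Q = HalfOpenCubeE d x ((n : ℝ) ^ k)) ∧
  (∀ Q ∈ G, ∀ R ∈ G, Q ∩ R = Q ∨ Q ∩ R = R ∨ Q ∩ R = ∅) ∧
  (∀ k : ℤ, ∀ y : EuclideanSpace ℝ (Fin d),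
    ∃! Q, Q ∈ G ∧ (∃ x : EuclideanSpace ℝ (Fin d), Q = HalfOpenCubeE d x ((n : ℝ) ^ k)) ∧ y ∈ Q)

/-- The half-open cubes of sidelength `2 ^ k`, `k : ℤ`, with corners in `2 ^ k (ℤ + s k) ^ d`. This is
a dyadic grid when every `2 s (k+1) - s k` is an integer. -/
def shiftedGrid (d : ℕ) (s : ℤ → ℝ) : Set (Set (EuclideanSpace ℝ (Fin d))) :=
  {Q | ∃ (k : ℤ) (m : Fin d → ℤ),
    Q = HalfOpenCubeE d (WithLp.toLp 2 fun i => (2 : ℝ) ^ k * (m i + s k)) ((2 : ℝ) ^ k)}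

lemma mem_cube_iff {d : ℕ} (s : ℤ → ℝ) (k : ℤ) (m : Fin d → ℤ) (y : EuclideanSpace ℝ (Fin d)) :
    y ∈ HalfOpenCubeE d (WithLp.toLp 2 fun i => (2 : ℝ) ^ k * (m i + s k)) ((2 : ℝ) ^ k) ↔
      ∀ i, (2 : ℝ) ^ k * (m i + s k) ≤ y i ∧ y i < (2 : ℝ) ^ k * (m i + 1 + s k) := by
  unfold HalfOpenCubeE
  simp only [Set.mem_ofPred_eq]
  refine forall_congr' fun i => and_congr Iff.rfl ?_
  rw [show (2 : ℝ) ^ k * (m i + 1 + s k) = (2 : ℝ) ^ k * (m i + s k) + 2 ^ k by ring]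

lemma side_le_of_cube_subset {d : ℕ} (hd : 1 ≤ d) {x x' : EuclideanSpace ℝ (Fin d)} {l l' : ℝ}
    (hl' : 0 < l') (h : HalfOpenCubeE d x l ⊆ HalfOpenCubeE d x' l') : l ≤ l' := by
  by_contra! hlt
  let i₀ : Fin d := ⟨0, hd⟩
  have h1 : x ∈ HalfOpenCubeE d x' l' := h fun i => ⟨le_rfl, by linarith⟩
  have h2 : (WithLp.toLp 2 fun i => x i + l' : EuclideanSpace ℝ (Fin d)) ∈
      HalfOpenCubeE d x' l' := h fun i => ⟨by simp [hl'.le], by simpa using hlt⟩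
  have h3 := (h1 i₀).1
  have h4 := (h2 i₀).2
  simp only at h4
  linarith

lemma exists_int_scaled_shift {s : ℤ → ℝ} (hs : ∀ k, ∃ c : ℤ, 2 * s (k + 1) - s k = c)
    (k : ℤ) (n : ℕ) : ∃ c : ℤ, 2 ^ n * s (k + n) - s k = c := by
  induction n with
  | zero => exact ⟨0, by simp⟩
  | succ n ih =>
    obtain ⟨c, hc⟩ := ih
    obtain ⟨e, he⟩ := hs (k + n)
    refine ⟨2 ^ n * e + c, ?_⟩
    push_cast
    rw [← he, ← hc, ← add_assoc]
    ring

/-- Two intersecting cubes of a shifted grid are nested: the corners of the larger one are also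
endpoints at the scale of the smaller one. -/
lemma cube_subset_of_inter {d : ℕ} {s : ℤ → ℝ} (hs : ∀ k, ∃ c : ℤ, 2 * s (k + 1) - s k = c)
    {k l : ℤ} (hkl : k ≤ l) {m m' : Fin d → ℤ} {y : EuclideanSpace ℝ (Fin d)}
    (hy : y ∈ HalfOpenCubeE d (WithLp.toLp 2 fun i => (2 : ℝ) ^ k * (m i + s k)) ((2 : ℝ) ^ k))
    (hy' : y ∈ HalfOpenCubeE d (WithLp.toLp 2 fun i => (2 : ℝ) ^ l * (m' i + s l)) ((2 : ℝ) ^ l)) :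
    HalfOpenCubeE d (WithLp.toLp 2 fun i => (2 : ℝ) ^ k * (m i + s k)) ((2 : ℝ) ^ k) ⊆
      HalfOpenCubeE d (WithLp.toLp 2 fun i => (2 : ℝ) ^ l * (m' i + s l)) ((2 : ℝ) ^ l) := by
  obtain ⟨n, rfl⟩ := Int.le.dest hkl
  obtain ⟨c, hc⟩ := exists_int_scaled_shift hs k n
  have h2 : (0 : ℝ) < 2 ^ k := by positivity
  have e (t : ℝ) : (2 : ℝ) ^ (k + n : ℤ) * (t + s (k + n)) = 2 ^ k * (2 ^ n * t + c + s k) := by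
    rw [zpow_add₀ (by norm_num), zpow_natCast, ← hc]
    ring
  rw [mem_cube_iff] at hy hy'
  intro w hw
  rw [mem_cube_iff] at hw ⊢
  intro i
  obtain ⟨a1, a2⟩ := hy i
  obtain ⟨b1, b2⟩ := hy' i
  obtain ⟨w1, w2⟩ := hw i
  rw [e] at b1 b2 ⊢
  rw [e]
  have u1 : (2 : ℝ) ^ n * m' i + c < m i + 1 := by
    have := lt_of_mul_lt_mul_left (b1.trans_lt a2) h2.le
    linarith
  have u2 : (m i : ℝ) < 2 ^ n * (m' i + 1) + c := by
    have := lt_of_mul_lt_mul_left (a1.trans_lt b2) h2.le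
    linarith
  have v1 : 2 ^ n * m' i + c ≤ m i := by
    have : 2 ^ n * m' i + c < m i + 1 := by exact_mod_cast u1
    omega
  have v2 : m i + 1 ≤ 2 ^ n * (m' i + 1) + c := by
    have : m i < 2 ^ n * (m' i + 1) + c := by exact_mod_cast u2
    omega
  have v1' : (2 : ℝ) ^ n * m' i + c ≤ m i := by exact_mod_cast v1
  have v2' : (m i : ℝ) + 1 ≤ 2 ^ n * (m' i + 1) + c := by exact_mod_cast v2
  constructor
  · exact (mul_le_mul_of_nonneg_left (by linarith) h2.le).trans w1
  · exact w2.trans_le (mul_le_mul_of_nonneg_left (by linarith) h2.le)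

/-- The endpoints at scale `2 ^ k` cut the line into intervals, one of which contains `t`. -/
lemma exists_endpoint (s : ℤ → ℝ) (k : ℤ) (t : ℝ) :
    ∃ m : ℤ, (2 : ℝ) ^ k * (m + s k) ≤ t ∧ t < (2 : ℝ) ^ k * (m + 1 + s k) := by
  have h2 : (0 : ℝ) < 2 ^ k := by positivity
  refine ⟨⌊t / 2 ^ k - s k⌋, ?_, ?_⟩
  · rw [← le_div_iff₀' h2]
    linarith [Int.floor_le (t / 2 ^ k - s k)]
  · rw [← div_lt_iff₀' h2]
    linarith [Int.lt_floor_add_one (t / 2 ^ k - s k)]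

lemma isNAdicGridE_shiftedGrid {d : ℕ} (hd : 1 ≤ d) {s : ℤ → ℝ}
    (hs : ∀ k, ∃ c : ℤ, 2 * s (k + 1) - s k = c) : IsNAdicGridE 2 d (shiftedGrid d s) := by
  refine ⟨?_, ?_, ?_⟩
  · rintro Q ⟨k, m, rfl⟩
    exact ⟨_, k, congrArg (HalfOpenCubeE d _) (by norm_num)⟩
  · rintro Q ⟨k, m, rfl⟩ R ⟨l, m', rfl⟩
    rcases Set.eq_empty_or_nonempty
      (HalfOpenCubeE d (WithLp.toLp 2 fun i => (2 : ℝ) ^ k * (m i + s k)) ((2 : ℝ) ^ k) ∩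
        HalfOpenCubeE d (WithLp.toLp 2 fun i => (2 : ℝ) ^ l * (m' i + s l)) ((2 : ℝ) ^ l))
      with h | ⟨y, hy, hy'⟩
    · exact Or.inr (Or.inr h)
    rcases le_total k l with h | h
    · exact Or.inl (Set.inter_eq_left.2 (cube_subset_of_inter hs h hy hy'))
    · exact Or.inr (Or.inl (Set.inter_eq_right.2 (cube_subset_of_inter hs h hy' hy)))
  · intro k y
    choose m hm using fun i => exists_endpoint s k (y i)
    have hym := (mem_cube_iff s k m y).2 hm
    refine ⟨_, ⟨⟨k, m, rfl⟩, ⟨_, congrArg (HalfOpenCubeE d _) (by norm_num)⟩, hym⟩, ?_⟩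
    rintro Q ⟨⟨l, m', rfl⟩, ⟨x, hx⟩, hy⟩
    -- the sidelength of a cube is determined by the cube as a set
    have hside : (2 : ℝ) ^ l = 2 ^ k := by
      rw [Nat.cast_ofNat] at hx
      exact le_antisymm (side_le_of_cube_subset hd (by positivity) hx.subset)
        (side_le_of_cube_subset hd (by positivity) hx.superset)
    obtain rfl : l = k := zpow_right_injective₀ (by norm_num) (by norm_num) hside
    exact (cube_subset_of_inter hs le_rfl hy hym).antisymm (cube_subset_of_inter hs le_rfl hym hy)

/-- Representatives of the powers `2 ^ (-k)` modulo the odd number `2 d + 1`. -/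
lemma exists_halving_sequence (d : ℕ) : ∃ a : ℤ → ℤ, ∀ k,
    ((2 * d + 1 : ℕ) : ℤ) ∣ 2 * a (k + 1) - a k ∧ IsCoprime ((2 * d + 1 : ℕ) : ℤ) (a k) := by
  let u : (ZMod (2 * d + 1))ˣ := ZMod.unitOfCoprime 2 (by simp)
  refine ⟨fun k => (((u ^ (-k) : (ZMod (2 * d + 1))ˣ) : ZMod (2 * d + 1)).val : ℤ), fun k => ⟨?_, ?_⟩⟩
  · rw [← ZMod.intCast_zmod_eq_zero_iff_dvd]
    have h2 : (2 : ZMod (2 * d + 1)) = (u : ZMod (2 * d + 1)) := by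
      simp [u, ZMod.coe_unitOfCoprime]
    have h : u * u ^ (-(k + 1)) = u ^ (-k) := by group
    push_cast
    rw [ZMod.natCast_zmod_val, ZMod.natCast_zmod_val, h2, ← Units.val_mul, h, sub_self]
  · exact Nat.isCoprime_iff_coprime.2 (ZMod.val_coe_unit_coprime _).symm

/-- Endpoints of scale `2 ^ k` belonging to different indices `j ≠ j'` are at distance at least
`2 ^ k / (2 d + 1)`. -/
lemma shift_separated {d : ℕ} {a : ℤ} (ha : IsCoprime ((2 * d + 1 : ℕ) : ℤ) a) {j j' : Fin (d + 1)}
    (hj : j ≠ j') (k m m' : ℤ) :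
    (2 : ℝ) ^ k ≤ (2 * d + 1) * |(2 : ℝ) ^ k * (m + (j : ℕ) * a / (2 * d + 1)) -
      2 ^ k * (m' + (j' : ℕ) * a / (2 * d + 1))| := by
  have hp : (0 : ℝ) < 2 * d + 1 := by positivity
  have h2 : (0 : ℝ) < 2 ^ k := by positivity
  have hN : (2 * d + 1) * (m - m') + ((j : ℕ) - (j' : ℕ) : ℤ) * a ≠ 0 := by
    intro h
    have hdvd : ((2 * d + 1 : ℕ) : ℤ) ∣ ((j : ℕ) - (j' : ℕ) : ℤ) * a :=
      ⟨-(m - m'), by push_cast; linarith⟩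
    have h1 := ha.dvd_of_dvd_mul_right hdvd
    have h3 : ((j : ℕ) - (j' : ℕ) : ℤ) = 0 := by
      apply Int.eq_zero_of_abs_lt_dvd h1
      rw [abs_lt]
      have := j.2
      have := j'.2
      push_cast
      constructor <;> omega
    exact hj (Fin.ext (by omega))
  have h1 : (1 : ℝ) ≤ |(((2 * d + 1) * (m - m') + ((j : ℕ) - (j' : ℕ) : ℤ) * a : ℤ) : ℝ)| := by
    exact_mod_cast Int.one_le_abs hN
  calc (2 : ℝ) ^ k ≤ 2 ^ k * |(((2 * d + 1) * (m - m') + ((j : ℕ) - (j' : ℕ) : ℤ) * a : ℤ) : ℝ)| :=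
        le_mul_of_one_le_right h2.le h1
    _ = _ := by
      rw [← abs_of_pos hp, ← abs_of_pos h2, ← abs_mul, ← abs_mul, abs_of_pos hp, abs_of_pos h2]
      congr 1
      push_cast
      field_simp
      ring

lemma diam_cube_le {d : ℕ} (x : EuclideanSpace ℝ (Fin d)) {l : ℝ} (hl : 0 ≤ l) :
    Metric.diam (HalfOpenCubeE d x l) ≤ √d * l := by
  refine Metric.diam_le_of_forall_dist_le (by positivity) fun y hy w hw => ?_
  rw [EuclideanSpace.dist_eq]
  refine Real.sqrt_le_iff.2 ⟨by positivity, ?_⟩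
  rw [mul_pow, Real.sq_sqrt (by positivity)]
  calc ∑ i, dist (y i) (w i) ^ 2 ≤ ∑ _i : Fin d, l ^ 2 := by
        refine Finset.sum_le_sum fun i _ => pow_le_pow_left₀ dist_nonneg ?_ 2
        obtain ⟨h1, h2⟩ := hy i
        obtain ⟨h3, h4⟩ := hw i
        rw [Real.dist_eq, abs_le]
        constructor <;> linarith
    _ = d * l ^ 2 := by simp

lemma le_diam_ball {d : ℕ} (hd : 1 ≤ d) (z : EuclideanSpace ℝ (Fin d)) {r : ℝ} (hr : 0 < r) :
    r ≤ Metric.diam (Metric.ball z r) := by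
  have : Nonempty (Fin d) := ⟨⟨0, hd⟩⟩
  rw [Metric.diam_ball_eq z hr.le]
  linarith

/-- If every coordinate excludes at most one of `d + 1` indices, some index is never excluded. -/
lemma exists_good_index {d : ℕ} (P : Fin d → Fin (d + 1) → Prop)
    (hP : ∀ i j j', P i j → P i j' → j = j') : ∃ j, ∀ i, ¬ P i j := by
  by_contra! h
  choose f hf using h
  have : Function.Injective f := fun j j' e => hP (f j) j j' (hf j) (e ▸ hf j')
  simpa using Fintype.card_le_of_injective f this

/-- (Conde Alonso) There exist `d+1` dyadic grids in `ℝ^d` and a constant `C_d > 0` such that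
every Euclidean ball is contained in some cube of one of the grids whose diameter is at most
`C_d` times the diameter of the ball. -/
theorem stmt0 (d : ℕ) (hd : 1 ≤ d) :
    ∃ (D : Fin (d + 1) → Set (Set (EuclideanSpace ℝ (Fin d)))) (C : ℝ),
      0 < C ∧ (∀ i, IsNAdicGridE 2 d (D i)) ∧
      ∀ (z : EuclideanSpace ℝ (Fin d)) (r : ℝ), 0 < r →
        ∃ (i : Fin (d + 1)) (Q : Set (EuclideanSpace ℝ (Fin d))),
          Q ∈ D i ∧ Metric.ball z r ⊆ Q ∧
          Metric.diam Q ≤ C * Metric.diam (Metric.ball z r) := by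
  obtain ⟨a, ha⟩ := exists_halving_sequence d
  have hp : (0 : ℝ) < 2 * d + 1 := by positivity
  have hd' : (0 : ℝ) < d := by exact_mod_cast hd
  let s : Fin (d + 1) → ℤ → ℝ := fun j k => (j : ℕ) * a k / (2 * d + 1)
  refine ⟨fun j => shiftedGrid d (s j), √d * (4 * (2 * d + 1)), by positivity, fun j => ?_, ?_⟩
  · refine isNAdicGridE_shiftedGrid hd fun k => ?_
    obtain ⟨c, hc⟩ := (ha k).1
    refine ⟨(j : ℕ) * c, ?_⟩
    have hc' : 2 * (a (k + 1) : ℝ) - a k = (2 * d + 1) * c := by exact_mod_cast hc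
    simp only [s]
    push_cast
    field_simp
    linear_combination ((j : ℕ) : ℝ) * hc'
  · intro z r hr
    obtain ⟨n, hn1, hn2⟩ := exists_mem_Ico_zpow (x := 2 * (2 * d + 1) * r) (y := (2 : ℝ))
      (by positivity) (by norm_num)
    set k := n + 1 with hk
    have hk1 : (2 : ℝ) ^ k ≤ 4 * (2 * d + 1) * r := by
      rw [hk, zpow_add₀ (by norm_num), zpow_one]
      linarith
    obtain ⟨j, hj⟩ := exists_good_index
      (fun i j => ∃ m : ℤ, |(2 : ℝ) ^ k * (m + s j k) - z i| < r) (by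
        rintro i j j' ⟨m, hm⟩ ⟨m', hm'⟩
        by_contra hne
        have h1 := shift_separated (ha k).2 hne k m m'
        have h2 : |(2 : ℝ) ^ k * (m + s j k) - 2 ^ k * (m' + s j' k)| < 2 * r := by
          rw [abs_lt] at *
          constructor <;> linarith
        have h3 := mul_lt_mul_of_pos_left h2 hp
        simp only [s] at h3
        linarith)
    choose m hm using fun i => exists_endpoint (s j) k (z i)
    refine ⟨j, _, ⟨k, m, rfl⟩, fun y hy => ?_, ?_⟩
    · rw [mem_cube_iff]
      intro i
      have hyi : |y i - z i| < r := by
        have := PiLp.norm_apply_le (y - z) i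
        rw [Metric.mem_ball, dist_eq_norm] at hy
        simpa using this.trans_lt hy
      have g1 := not_lt.1 (not_exists.1 (hj i) (m i))
      have g2 := not_lt.1 (not_exists.1 (hj i) (m i + 1))
      push_cast at g2
      obtain ⟨h1, h2⟩ := hm i
      rw [abs_of_nonpos (by linarith)] at g1
      rw [abs_of_pos (by linarith)] at g2
      rw [abs_lt] at hyi
      constructor <;> linarith
    · calc _ ≤ √d * (2 : ℝ) ^ k := diam_cube_le _ (by positivity)
        _ ≤ √d * (4 * (2 * d + 1) * r) := by gcongr
        _ ≤ √d * (4 * (2 * d + 1) * Metric.diam (Metric.ball z r)) := by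
          gcongr
          exact le_diam_ball hd z hr
        _ = _ := by ring
end

section
/- Let n ≥ 2 and d ≥ 1 be integers. For any d n-adic grids 𝒢_1, …, 𝒢_d in ℝ^d and any constant C > 0, there exists a half-open cube Q ⊆ ℝ^d such that no cube R ∈ 𝒢_1 ∪ ⋯ ∪ 𝒢_d satisfies both Q ⊆ R and ℓ(R) ≤ C·ℓ(Q). (Thus d grids never suffice for the dyadic covering property; d+1 is optimal.) -/
/-!
If `Q` contains both a point of a cube `S ∈ 𝒢_i` and a point outside `S`, then by nestedness every
`R ∈ 𝒢_i` with `Q ⊆ R` contains `S`, so `ℓ(R) ≥ ℓ(S)`. Hence it suffices to find one point `x` lying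
on the boundary of some cube `S_i ∈ 𝒢_i` for every `i` at once: a tiny cube centred at `x` then works.

Such an `x` exists because there are as many coordinates as grids: `x` is put on the lower face of
`S_i` orthogonal to the `i`-th axis. The cubes are chosen one after the other
(`exists_common_boundary`), each much smaller than the preceding ones. Once the first `m`
coordinates are fixed, the others may still vary in a small open box without leaving the first `m`
faces, and a small cube of `𝒢_m` meeting that piece of the faces determines the next coordinate.
-/

/-- The half-open cube `[x₁, x₁+ℓ) × ⋯ × [x_d, x_d+ℓ)` in `ℝ^d`. -/
def HalfOpenCube (d : ℕ) (x : Fin d → ℝ) (ℓ : ℝ) : Set (Fin d → ℝ) :=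
  {y | ∀ i, x i ≤ y i ∧ y i < x i + ℓ}

/-- `G` is an `n`-adic grid in `ℝ^d`. -/
def IsNAdicGrid (n d : ℕ) (G : Set (Set (Fin d → ℝ))) : Prop :=
  (∀ Q ∈ G, ∃ (x : Fin d → ℝ) (k : ℤ), Q = HalfOpenCube d x ((n : ℝ) ^ k)) ∧
  (∀ Q ∈ G, ∀ R ∈ G, Q ∩ R = Q ∨ Q ∩ R = R ∨ Q ∩ R = ∅) ∧
  (∀ k : ℤ, ∀ y : Fin d → ℝ,
    ∃! Q, Q ∈ G ∧ (∃ x : Fin d → ℝ, Q = HalfOpenCube d x ((n : ℝ) ^ k)) ∧ y ∈ Q)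

/-- Every point is contained in arbitrarily small cubes of an `n`-adic grid. -/
lemma exists_small_cube {n d : ℕ} (hn : 2 ≤ n) {G : Set (Set (Fin d → ℝ))}
    (hG : IsNAdicGrid n d G) (p : Fin d → ℝ) {δ : ℝ} (hδ : 0 < δ) :
    ∃ (b : Fin d → ℝ) (s : ℝ), 0 < s ∧ s < δ ∧ HalfOpenCube d b s ∈ G ∧
      p ∈ HalfOpenCube d b s := by
  have hn' : (2 : ℝ) ≤ n := by exact_mod_cast hn
  obtain ⟨k, hk⟩ := exists_pow_lt_of_lt_one hδ (inv_lt_one_of_one_lt₀ (by linarith : (1 : ℝ) < n))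
  obtain ⟨Q, ⟨hQ, ⟨b, rfl⟩, hp⟩, -⟩ := hG.2.2 (-(k : ℤ)) p
  refine ⟨b, _, by positivity, ?_, hQ, hp⟩
  rw [zpow_neg, zpow_natCast, ← inv_pow]
  exact hk

/-- For `m ≤ d` there are cubes `[b i, b i + s i)` of the grids `G i`, `i < m`, and a point `p` such
that every point agreeing with `p` in the first `m` coordinates and `δ`-close to it in the others
lies, for each `i < m`, on the lower face of the `i`-th cube orthogonal to the `i`-th axis. -/
lemma exists_common_boundary {n d : ℕ} (hn : 2 ≤ n)
    (G : Fin d → Set (Set (Fin d → ℝ))) (hG : ∀ i, IsNAdicGrid n d (G i)) (m : ℕ) (hm : m ≤ d) :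
    ∃ (p : Fin d → ℝ) (δ : ℝ) (b : Fin d → Fin d → ℝ) (s : Fin d → ℝ), 0 < δ ∧
      ∀ i : Fin d, i.val < m → HalfOpenCube d (b i) (s i) ∈ G i ∧ δ < s i ∧
        ∀ x : Fin d → ℝ, (∀ j : Fin d, j.val < m → x j = p j) →
          (∀ j : Fin d, m ≤ j.val → |x j - p j| < δ) →
          x ∈ HalfOpenCube d (b i) (s i) ∧ x i = b i i := by
  induction m with
  | zero => exact ⟨0, 1, 0, 0, one_pos, fun i hi => absurd hi (Nat.not_lt_zero _)⟩
  | succ m ih =>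
    obtain ⟨p, δ, b, s, hδ, h⟩ := ih (by omega)
    obtain ⟨c, t, ht, htδ, hc, hp⟩ := exists_small_cube hn (hG ⟨m, hm⟩) p hδ
    -- The new point keeps the first `m` coordinates, lies on the lower face in direction `m`, and
    -- is recentred in the new cube in the remaining directions, which leaves a margin of `t / 2`.
    refine ⟨fun j => if j.val < m then p j else if j.val = m then c j else c j + t / 2, t / 2,
      fun i => if i.val < m then b i else c, fun i => if i.val < m then s i else t,
      by positivity, fun i hi => ?_⟩
    have key : ∀ x : Fin d → ℝ, (∀ j : Fin d, j.val < m + 1 →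
          x j = if j.val < m then p j else if j.val = m then c j else c j + t / 2) →
        (∀ j : Fin d, m + 1 ≤ j.val →
          |x j - if j.val < m then p j else if j.val = m then c j else c j + t / 2| < t / 2) →
        (∀ j : Fin d, j.val < m → x j = p j) ∧ (∀ j : Fin d, j.val = m → x j = c j) ∧
        (∀ j : Fin d, c j ≤ x j ∧ x j < c j + t) := by
      intro x h1 h2
      have e1 : ∀ j : Fin d, j.val < m → x j = p j := fun j hj => by
        rw [h1 j (by omega), if_pos hj]
      have e2 : ∀ j : Fin d, j.val = m → x j = c j := fun j hj => by
        rw [h1 j (by omega), if_neg (by omega), if_pos hj]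
      refine ⟨e1, e2, fun j => ?_⟩
      rcases lt_trichotomy j.val m with hj | hj | hj
      · rw [e1 j hj]; exact hp j
      · rw [e2 j hj]; constructor <;> linarith
      · have := h2 j hj
        rw [if_neg (by omega), if_neg (by omega), abs_lt] at this
        constructor <;> linarith
    by_cases him : i.val < m
    · obtain ⟨h1, h2, h3⟩ := h i him
      simp only [if_pos him]
      refine ⟨h1, by linarith, fun x hx hx' => ?_⟩
      obtain ⟨e1, -, e3⟩ := key x hx hx'
      refine h3 x e1 fun j _ => ?_
      have := hp j
      have := e3 j
      rw [abs_lt]; constructor <;> linarith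
    · obtain rfl : i = ⟨m, hm⟩ := Fin.ext (by simp only; omega)
      simp only [lt_irrefl, if_false]
      refine ⟨hc, by linarith, fun x hx hx' => ?_⟩
      obtain ⟨-, e2, e3⟩ := key x hx hx'
      exact ⟨e3, e2 _ rfl⟩

/-- The index `i` serves only to rule out `d = 0`, where all cubes coincide. -/
lemma side_le_of_subset {d : ℕ} (i : Fin d) {b y : Fin d → ℝ} {r s : ℝ} (hr : 0 < r)
    (h : HalfOpenCube d b r ⊆ HalfOpenCube d y s) : r ≤ s := by
  by_contra! hsr
  obtain ⟨h1, h1'⟩ := h (show b ∈ HalfOpenCube d b r from fun j => ⟨le_rfl, by linarith⟩) i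
  have h2 : b i + s < y i + s := (h (show (fun j => b j + s) ∈ HalfOpenCube d b r from
    fun j => ⟨by linarith, by linarith⟩) i).2
  linarith

/-- `d` many `n`-adic grids in `ℝ^d` never suffice for the dyadic covering property:
for any constant `C > 0` there is a half-open cube `Q` which is contained in no cube `R`
of the grids with sidelength `ℓ(R) ≤ C·ℓ(Q)`. -/
theorem stmt1 (n d : ℕ) (hn : 2 ≤ n) (hd : 1 ≤ d)
    (G : Fin d → Set (Set (Fin d → ℝ))) (hG : ∀ i, IsNAdicGrid n d (G i))
    (C : ℝ) (hC : 0 < C) :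
    ∃ (x : Fin d → ℝ) (ℓ : ℝ), 0 < ℓ ∧
      ∀ i : Fin d, ∀ R ∈ G i, ∀ (y : Fin d → ℝ) (s : ℝ),
        R = HalfOpenCube d y s → HalfOpenCube d x ℓ ⊆ R → C * ℓ < s := by
  obtain ⟨p, δ, b, r, hδ, h⟩ := exists_common_boundary hn G hG d le_rfl
  have hε : 0 < δ / C := by positivity
  refine ⟨fun j => p j - δ / C / 2, δ / C, hε, ?_⟩
  rintro i R hR y s rfl hQ
  obtain ⟨hS, hδr, hx⟩ := h i i.isLt
  obtain ⟨hpS, hpi⟩ := hx p (fun _ _ => rfl) (fun j hj => absurd j.isLt (by omega))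
  have hpR : p ∈ HalfOpenCube d y s := hQ fun j => ⟨by linarith, by linarith⟩
  -- The lower corner of `Q` lies below the `i`-th lower face of the cube of `G i` through `p`.
  have hcR : (fun j => p j - δ / C / 2) ∈ HalfOpenCube d y s :=
    hQ fun j => ⟨le_rfl, by linarith⟩
  have hcS : (fun j => p j - δ / C / 2) ∉ HalfOpenCube d (b i) (r i) := fun hc => by
    have := (hc i).1
    simp only at this
    linarith
  have hCδ : C * (δ / C) = δ := by field_simp
  rw [hCδ]
  refine hδr.trans_le (side_le_of_subset (b := b i) (y := y) i (hδ.trans hδr) ?_)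
  rcases (hG i).2.1 _ hR _ hS with h1 | h1 | h1
  · exact absurd (Set.inter_eq_left.1 h1 hcR) hcS
  · exact Set.inter_eq_right.1 h1
  · exact absurd (h1 ▸ ⟨hpR, hpS⟩ : p ∈ (∅ : Set (Fin d → ℝ))) (Set.notMem_empty p)
end

section
/- Let n ≥ 2 and d ≥ 1 be integers, let δ_1, …, δ_{d+1} ∈ ℝ^d, and let 𝐚_1, …, 𝐚_{d+1} be sequences of digit vectors in {0,…,n−1}^d with location functions ℒ_{𝐚_1}, …, ℒ_{𝐚_{d+1}}. Then the n-adic grids 𝒢(δ_1, ℒ_{𝐚_1}), …, 𝒢(δ_{d+1}, ℒ_{𝐚_{d+1}}) in ℝ^d are adjacent if and only if both of the following hold: (1) for all ℓ_1 ≠ ℓ_2 in {1,…,d+1} and all s ∈ {1,…,d}, the real number (δ_{ℓ_1})_s − (δ_{ℓ_2})_s is n-far; (2) for all k_1 ≠ k_2 in {1,…,d+1} and all s ∈ {1,…,d}, 0 < liminf_{j→∞} |([ℒ_{𝐚_{k_1}}(j)]_s − [ℒ_{𝐚_{k_2}}(j)]_s)/n^j| ≤ limsup_{j→∞} |([ℒ_{𝐚_{k_1}}(j)]_s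 − [ℒ_{𝐚_{k_2}}(j)]_s)/n^j| < 1. -/
/-!
At each scale `n ^ e` (`e : ℤ`) and in each coordinate, a grid has a set of walls: an arithmetic
progression of step `n ^ e`. Walls of a scale stay walls at every finer scale (`IsWall.mono`). Both
sides of the equivalence say that, in every coordinate, walls of two different grids at the same
scale `n ^ e` stay at distance at least `c * n ^ e`, with `c > 0` independent of `e`.

* Separation gives adjacency (`adjacent_of_wallSep`): if `ℓ ≤ c * n ^ e`, then each of the `d` sides
  of a cube of sidelength `ℓ` is cut by walls of at most one grid, so one of the `d + 1` grids does
  not cut the cube at all, and the cube lies in a single cell of that grid.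
* Adjacency gives separation (`wallSep_of_adjacent`): if walls of two grids nearly meet in the
  coordinate `s`, a small cube is placed across both of them there, and across one wall of each of
  the other `d - 1` grids in the `d - 1` other coordinates. Every grid then cuts it at scale
  `n ^ e`, hence at all finer scales, so only a cell larger than `n ^ e` can contain it.
* For two grids, the distances between walls are `|Δ + D j + k * n ^ j|`, where `Δ` is the
  difference of the initial points and `D` that of the location functions. At scales at most `1`
  the separation is exactly `n`-farness of `Δ`. At large scales `Δ` is negligible and
  `|D j| < n ^ j`, so that only `k = 0` and `k = ±1` matter, which gives the liminf and the limsup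
  condition. The remaining finitely many scales only need `Δ ∉ ℤ` (`sep_iff`).
-/


open scoped BigOperators

/-- A family of `N` `n`-adic grids in `ℝ^d` is adjacent: there is a constant `C > 0` such
that every half-open cube is contained in some cube of one of the grids whose sidelength
is at most `C` times its own. -/
def IsAdjacentFamily (n d N : ℕ) (G : Fin N → Set (Set (Fin d → ℝ))) : Prop :=
  ∃ C > (0 : ℝ), ∀ (x : Fin d → ℝ) (ℓ : ℝ), 0 < ℓ →
    ∃ (i : Fin N) (R : Set (Fin d → ℝ)), R ∈ G i ∧ HalfOpenCube d x ℓ ⊆ R ∧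
      ∃ (y : Fin d → ℝ) (s : ℝ), R = HalfOpenCube d y s ∧ s ≤ C * ℓ

/-- The location function `ℒ_𝐚(j) = Σ_{k<j} n^k a_k` associated to a digit-vector sequence. -/
def locFun (n d : ℕ) (a : ℕ → Fin d → ℕ) (j : ℕ) (i : Fin d) : ℤ :=
  ∑ k ∈ Finset.range j, (n : ℤ) ^ k * (a k i : ℤ)

/-- The `n`-adic grid `𝒢(δ, ℒ_𝐚)`: for `m ≥ 0` the `m`-th generation consists of the cubes
`δ + n^{-m}(k + [0,1)^d)`, and for `m = -j < 0` of the cubes `δ + ℒ_𝐚(j) + n^{j}(k + [0,1)^d)`. -/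
def GridRep (n d : ℕ) (δ : Fin d → ℝ) (a : ℕ → Fin d → ℕ) : Set (Set (Fin d → ℝ)) :=
  {Q | (∃ (m : ℕ) (k : Fin d → ℤ),
          Q = HalfOpenCube d (fun i => δ i + (k i) * (n : ℝ) ^ (-(m : ℤ))) ((n : ℝ) ^ (-(m : ℤ)))) ∨
       (∃ (j : ℕ) (k : Fin d → ℤ), 0 < j ∧
          Q = HalfOpenCube d (fun i => δ i + (locFun n d a j i : ℝ) + (k i) * (n : ℝ) ^ (j : ℕ))
              ((n : ℝ) ^ (j : ℕ)))}

/-- A real number `δ` is `n`-far: `|δ - k/n^m| ≥ C/n^m` for all `m ≥ 0`, `k ∈ ℤ`. -/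
def IsNFar (n : ℕ) (δ : ℝ) : Prop :=
  ∃ C > (0 : ℝ), ∀ (m : ℕ) (k : ℤ), C / (n : ℝ) ^ m ≤ |δ - (k : ℝ) / (n : ℝ) ^ m|

/-! ### Cubes and walls -/

lemma halfOpenCube_subset {d : ℕ} {x y : Fin d → ℝ} {ℓ s : ℝ}
    (h : ∀ i, y i ≤ x i ∧ x i + ℓ ≤ y i + s) : HalfOpenCube d x ℓ ⊆ HalfOpenCube d y s := by
  intro z hz i
  have h1 := hz i
  have h2 := h i
  constructor <;> linarith

lemma le_of_halfOpenCube_subset {d : ℕ} {x y : Fin d → ℝ} {ℓ s : ℝ} (hℓ : 0 < ℓ)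
    (h : HalfOpenCube d x ℓ ⊆ HalfOpenCube d y s) (i : Fin d) :
    y i ≤ x i ∧ x i + ℓ ≤ y i + s := by
  have hx : x ∈ HalfOpenCube d x ℓ := fun j => ⟨le_rfl, by linarith⟩
  refine ⟨(h hx i).1, ?_⟩
  -- If the larger cube ended earlier, the point of `HalfOpenCube d x ℓ` whose `i`-th coordinate is
  -- the right endpoint of the larger cube would be excluded from the latter.
  by_contra! hlt
  have h1 := (h hx i).2
  have hz : Function.update x i (y i + s) ∈ HalfOpenCube d x ℓ := by
    intro j
    by_cases hj : j = i
    · subst hj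
      rw [Function.update_self]
      exact ⟨h1.le, hlt⟩
    · rw [Function.update_of_ne hj]
      exact hx j
  have h2 := (h hz i).2
  rw [Function.update_self] at h2
  exact lt_irrefl _ h2

/-- The `s`-th coordinate of the reference corner of the cells of sidelength `n ^ e` in
`GridRep n d δ a`. For `e ≤ 0` the truncation `e.toNat = 0` makes it equal to `δ s`. -/
def corner (n d : ℕ) (δ : Fin d → ℝ) (a : ℕ → Fin d → ℕ) (e : ℤ) (s : Fin d) : ℝ :=
  δ s + (locFun n d a e.toNat s : ℝ)

/-- The hyperplane whose `s`-th coordinate is `p` bounds cells of sidelength `n ^ e` of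
`GridRep n d δ a`. -/
def IsWall (n d : ℕ) (δ : Fin d → ℝ) (a : ℕ → Fin d → ℕ) (e : ℤ) (s : Fin d) (p : ℝ) : Prop :=
  ∃ k : ℤ, p = corner n d δ a e s + k * (n : ℝ) ^ e

/-- The two families of generations in `GridRep`, indexed together by the exponent of the
sidelength. -/
lemma mem_gridRep_iff {n d : ℕ} {δ : Fin d → ℝ} {a : ℕ → Fin d → ℕ} {Q : Set (Fin d → ℝ)} :
    Q ∈ GridRep n d δ a ↔ ∃ (e : ℤ) (k : Fin d → ℤ),
      Q = HalfOpenCube d (fun i => corner n d δ a e i + (k i) * (n : ℝ) ^ e) ((n : ℝ) ^ e) := by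
  constructor
  · rintro (⟨m, k, rfl⟩ | ⟨j, k, -, rfl⟩)
    · refine ⟨-(m : ℤ), k, ?_⟩
      have : (-(m : ℤ)).toNat = 0 := by omega
      simp [corner, this, locFun]
    · exact ⟨j, k, by simp [corner]⟩
  · rintro ⟨e, k, rfl⟩
    rcases le_or_gt e 0 with he | he
    · left
      refine ⟨(-e).toNat, k, ?_⟩
      have h0 : e.toNat = 0 := by omega
      have h1 : -(((-e).toNat : ℕ) : ℤ) = e := by omega
      rw [h1]
      simp [corner, h0, locFun]
    · right
      refine ⟨e.toNat, k, by omega, ?_⟩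
      have h1 : ((e.toNat : ℕ) : ℤ) = e := by omega
      have h2 : (n : ℝ) ^ e = (n : ℝ) ^ e.toNat := by
        rw [← zpow_natCast, h1]
      simp [corner, h2]

lemma IsWall.pred {n d : ℕ} (hn : 2 ≤ n) {δ : Fin d → ℝ} {a : ℕ → Fin d → ℕ} {e : ℤ} {s : Fin d}
    {p : ℝ} (h : IsWall n d δ a (e + 1) s p) : IsWall n d δ a e s p := by
  obtain ⟨k, rfl⟩ := h
  have hn0 : (n : ℝ) ≠ 0 := by positivity
  rcases lt_or_ge e 0 with he | he
  · refine ⟨k * n, ?_⟩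
    have h0 : e.toNat = 0 := by omega
    have h1 : (e + 1).toNat = 0 := by omega
    simp only [corner, h0, h1, zpow_add_one₀ hn0]
    push_cast
    ring
  · refine ⟨a e.toNat s + k * n, ?_⟩
    have h1 : (e + 1).toNat = e.toNat + 1 := by omega
    have h2 : (n : ℝ) ^ e = (n : ℝ) ^ e.toNat := by
      rw [← zpow_natCast, Int.toNat_of_nonneg he]
    simp only [corner, h1, zpow_add_one₀ hn0, locFun, Finset.sum_range_succ, h2]
    push_cast
    ring

/-- Walls at one scale remain walls at all finer scales. -/
lemma IsWall.mono {n d : ℕ} (hn : 2 ≤ n) {δ : Fin d → ℝ} {a : ℕ → Fin d → ℕ} {e e' : ℤ}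
    (hee : e' ≤ e) {s : Fin d} {p : ℝ} (h : IsWall n d δ a e s p) : IsWall n d δ a e' s p := by
  induction e', hee using Int.leInductionDown with
  | base => exact h
  | pred m _ ih => exact IsWall.pred hn (by simpa using ih)

/-! ### Adjacency as separation of walls -/

/-- In the coordinate `s`, walls of the grids with parameters `(δ₁, a₁)` and `(δ₂, a₂)` at the same
scale are separated by a fixed proportion of the scale. -/
def WallSep (n d : ℕ) (δ₁ δ₂ : Fin d → ℝ) (a₁ a₂ : ℕ → Fin d → ℕ) (s : Fin d) : Prop :=
  ∃ c > (0 : ℝ), ∀ (e : ℤ) (p q : ℝ), IsWall n d δ₁ a₁ e s p → IsWall n d δ₂ a₂ e s q →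
    c * (n : ℝ) ^ e ≤ |p - q|

lemma wallSep_of_adjacent {n d : ℕ} (hn : 2 ≤ n)
    {δ : Fin (d + 1) → Fin d → ℝ} {a : Fin (d + 1) → ℕ → Fin d → ℕ}
    (h : IsAdjacentFamily n d (d + 1) (fun i => GridRep n d (δ i) (a i)))
    {i j : Fin (d + 1)} (hij : i ≠ j) (s : Fin d) : WallSep n d (δ i) (δ j) (a i) (a j) s := by
  obtain ⟨C, hC, h⟩ := h
  have hn1 : (1 : ℝ) < n := by exact_mod_cast (by omega : 1 < n)
  refine ⟨1 / C, by positivity, fun e p q hp hq => ?_⟩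
  by_contra! hlt
  obtain ⟨ℓ, hℓ1, hℓ2⟩ := exists_between hlt
  have hℓ : 0 < ℓ := (abs_nonneg _).trans_lt hℓ1
  -- `σ` assigns to the coordinate `s` the grid `j`, and to the other coordinates the grids
  -- different from `i` and `j`.
  obtain ⟨σ, hσ⟩ : ∃ σ : Fin d ≃ {l : Fin (d + 1) // l ≠ i}, σ s = ⟨j, hij.symm⟩ := by
    let e0 : Fin d ≃ {l : Fin (d + 1) // l ≠ i} := finSuccAboveEquiv i
    exact ⟨(Equiv.swap s (e0.symm ⟨j, hij.symm⟩)).trans e0, by simp⟩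
  set x : Fin d → ℝ := fun t =>
    if t = s then (p + q) / 2 - ℓ / 2 else
      corner n d (δ (σ t)) (a (σ t)) e t - ℓ / 2 with hx
  have hcut : ∀ l : Fin (d + 1), ∃ t b, IsWall n d (δ l) (a l) e t b ∧ x t < b ∧ b < x t + ℓ := by
    have habs := abs_lt.mp hℓ1
    intro l
    by_cases hl : l = i
    · subst hl
      refine ⟨s, p, hp, ?_⟩
      simp only [hx, if_true]
      constructor <;> linarith
    · obtain ⟨t, ht⟩ := σ.surjective ⟨l, hl⟩
      by_cases hts : t = s
      · subst hts
        have hlj : l = j := by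
          rw [hσ] at ht
          exact (congrArg Subtype.val ht).symm
        subst hlj
        refine ⟨t, q, hq, ?_⟩
        simp only [hx, if_true]
        constructor <;> linarith
      · refine ⟨t, corner n d (δ l) (a l) e t, ⟨0, by simp⟩, ?_⟩
        simp only [hx, if_neg hts, ht]
        constructor <;> linarith
  obtain ⟨l, R, hR, hsub, y, r, hRy, hr⟩ := h x ℓ hℓ
  obtain ⟨e', k, hRk⟩ := mem_gridRep_iff.mp hR
  have hpos : (0 : ℝ) < (n : ℝ) ^ e' := by positivity
  -- The sidelength of `R` is bounded by any of its representations as a cube.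
  have hside : (n : ℝ) ^ e' ≤ r := by
    have := le_of_halfOpenCube_subset hpos (hRk.symm.trans hRy).subset s
    linarith [this.1, this.2]
  have he : e' < e := by
    have h1 : C * ℓ < (n : ℝ) ^ e := by
      calc C * ℓ < C * (1 / C * (n : ℝ) ^ e) := by gcongr
        _ = (n : ℝ) ^ e := by field_simp
    exact (zpow_lt_zpow_iff_right₀ hn1).mp (by linarith)
  obtain ⟨t, b, hb, hb1, hb2⟩ := hcut l
  obtain ⟨k', hk'⟩ := hb.mono hn he.le
  have := le_of_halfOpenCube_subset hℓ (hsub.trans hRk.subset) t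
  have h1 : (k t : ℝ) * (n : ℝ) ^ e' < k' * (n : ℝ) ^ e' := by linarith [this.1]
  have h2 : (k' : ℝ) * (n : ℝ) ^ e' < (k t + 1) * (n : ℝ) ^ e' := by linarith [this.2]
  have h3 := lt_of_mul_lt_mul_right h1 hpos.le
  have h4 := lt_of_mul_lt_mul_right h2 hpos.le
  norm_cast at h3 h4
  omega

lemma adjacent_of_wallSep {n d : ℕ} (hn : 2 ≤ n)
    {δ : Fin (d + 1) → Fin d → ℝ} {a : Fin (d + 1) → ℕ → Fin d → ℕ}
    (h : ∀ i j : Fin (d + 1), i ≠ j → ∀ s, WallSep n d (δ i) (δ j) (a i) (a j) s) :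
    IsAdjacentFamily n d (d + 1) (fun i => GridRep n d (δ i) (a i)) := by
  have hn1 : (1 : ℝ) < n := by exact_mod_cast (by omega : 1 < n)
  -- A separation constant valid for all pairs of grids and all coordinates.
  obtain ⟨c, hc, hsep⟩ : ∃ c > (0 : ℝ), ∀ i j : Fin (d + 1), i ≠ j → ∀ s (e : ℤ) (p q : ℝ),
      IsWall n d (δ i) (a i) e s p → IsWall n d (δ j) (a j) e s q →
      c * (n : ℝ) ^ e ≤ |p - q| := by
    have h' : ∀ z : Fin (d + 1) × Fin (d + 1) × Fin d, ∃ c > (0 : ℝ), z.1 ≠ z.2.1 →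
        ∀ (e : ℤ) (p q : ℝ), IsWall n d (δ z.1) (a z.1) e z.2.2 p →
        IsWall n d (δ z.2.1) (a z.2.1) e z.2.2 q → c * (n : ℝ) ^ e ≤ |p - q| := by
      intro z
      by_cases hz : z.1 = z.2.1
      · exact ⟨1, one_pos, fun hne => absurd hz hne⟩
      · obtain ⟨c, hc, hcs⟩ := h _ _ hz z.2.2
        exact ⟨c, hc, fun _ => hcs⟩
    choose c hc hcs using h'
    obtain ⟨m, hm, hmc⟩ : ∃ m > (0 : ℝ), ∀ z, m ≤ c z := by
      rcases isEmpty_or_nonempty (Fin (d + 1) × Fin (d + 1) × Fin d) with hE | hE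
      · exact ⟨1, one_pos, fun z => hE.elim z⟩
      · obtain ⟨z0, hz0⟩ := Finite.exists_min c
        exact ⟨c z0, hc z0, hz0⟩
    refine ⟨m, hm, fun i j hij s e p q hp hq => ?_⟩
    refine le_trans ?_ (hcs (i, j, s) hij e p q hp hq)
    gcongr
    exact hmc _
  refine ⟨n / c, by positivity, fun x ℓ hℓ => ?_⟩
  -- `n ^ (e + 1)` is the smallest scale `r` with `ℓ ≤ c * r`.
  obtain ⟨e, he1, he2⟩ := exists_mem_Ioc_zpow (x := ℓ / c) (y := (n : ℝ)) (by positivity) hn1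
  have hscale : ℓ ≤ c * (n : ℝ) ^ (e + 1) := by
    rwa [div_le_iff₀ hc, mul_comm] at he2
  have hsize : (n : ℝ) ^ (e + 1) ≤ n / c * ℓ := by
    rw [zpow_add_one₀ (by positivity)]
    calc (n : ℝ) ^ e * n ≤ ℓ / c * n := by gcongr
      _ = n / c * ℓ := by ring
  generalize e + 1 = E at hscale hsize
  have hpos : (0 : ℝ) < (n : ℝ) ^ E := by positivity
  by_contra! hno
  have hcut : ∀ l : Fin (d + 1), ∃ t b,
      IsWall n d (δ l) (a l) E t b ∧ x t < b ∧ b < x t + ℓ := by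
    intro l
    by_contra! hnc
    -- The candidate cell is the one containing the corner `x`.
    set k : Fin d → ℤ := fun t => ⌊(x t - corner n d (δ l) (a l) E t) / (n : ℝ) ^ E⌋ with hk
    refine absurd hsize (not_le.mpr (hno l _ (mem_gridRep_iff.mpr ⟨E, k, rfl⟩) ?_ _ _ rfl))
    refine halfOpenCube_subset fun t => ?_
    have h1 : (k t : ℝ) * (n : ℝ) ^ E ≤ x t - corner n d (δ l) (a l) E t :=
      (le_div_iff₀ hpos).mp (Int.floor_le _)
    have h2 : x t - corner n d (δ l) (a l) E t < (k t + 1) * (n : ℝ) ^ E :=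
      (div_lt_iff₀ hpos).mp (Int.lt_floor_add_one _)
    have h3 := hnc t _ ⟨k t + 1, rfl⟩ (by push_cast; linarith)
    push_cast at h3
    constructor <;> linarith
  choose t b hb hb1 hb2 using hcut
  obtain ⟨l, l', hll, htt⟩ := Fintype.exists_ne_map_eq_of_card_lt t (by simp)
  have hb' := hb l'
  have h1 := hb1 l'
  have h2 := hb2 l'
  rw [← htt] at hb' h1 h2
  have h3 := hsep l l' hll (t l) E _ _ (hb l) hb'
  have h4 : |b l - b l'| < ℓ := abs_lt.mpr ⟨by linarith [hb1 l], by linarith [hb2 l]⟩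
  linarith

/-! ### Separation of walls in terms of initial points and location functions -/

lemma locFun_nonneg (n d : ℕ) (a : ℕ → Fin d → ℕ) (j : ℕ) (s : Fin d) : 0 ≤ locFun n d a j s :=
  Finset.sum_nonneg fun _ _ => by positivity

lemma locFun_lt {n d : ℕ} {a : ℕ → Fin d → ℕ} (hn : 2 ≤ n) {s : Fin d} (ha : ∀ j, a j s < n)
    (j : ℕ) : locFun n d a j s < (n : ℤ) ^ j := by
  induction j with
  | zero => simp [locFun]
  | succ j ih =>
    have h1 : locFun n d a (j + 1) s = locFun n d a j s + (n : ℤ) ^ j * (a j s : ℤ) := by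
      simp [locFun, Finset.sum_range_succ]
    have h2 : (a j s : ℤ) + 1 ≤ n := by exact_mod_cast ha j
    have h3 : (n : ℤ) ^ j * ((a j s : ℤ) + 1) ≤ (n : ℤ) ^ j * n := by gcongr
    rw [h1, pow_succ]
    linarith

/-- Uniform separation for one coordinate of one pair of grids: `Δ` stands for the difference of
the initial points and `D` for the difference of the location functions. -/
lemma sep_iff {n : ℕ} (hn : 2 ≤ n) (Δ : ℝ) (D : ℕ → ℤ) (hD0 : D 0 = 0)
    (hD : ∀ j, |(D j : ℝ)| < (n : ℝ) ^ j) :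
    (∃ c > (0 : ℝ), ∀ (e k : ℤ), c * (n : ℝ) ^ e ≤ |Δ + D e.toNat + k * (n : ℝ) ^ e|) ↔
      IsNFar n Δ ∧
        (0 < Filter.liminf (fun j : ℕ => |(D j : ℝ)| / (n : ℝ) ^ j) Filter.atTop ∧
          Filter.liminf (fun j : ℕ => |(D j : ℝ)| / (n : ℝ) ^ j) Filter.atTop ≤
            Filter.limsup (fun j : ℕ => |(D j : ℝ)| / (n : ℝ) ^ j) Filter.atTop ∧
          Filter.limsup (fun j : ℕ => |(D j : ℝ)| / (n : ℝ) ^ j) Filter.atTop < 1) := by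
  have hn1 : (1 : ℝ) < n := by exact_mod_cast (by omega : 1 < n)
  have hpow : ∀ j : ℕ, (0 : ℝ) < (n : ℝ) ^ j := fun j => by positivity
  set u : ℕ → ℝ := fun j => |(D j : ℝ)| / (n : ℝ) ^ j with hu
  have hu0 : ∀ j, 0 ≤ u j := fun j => by positivity
  have hu1 : ∀ j, u j ≤ 1 := fun j => (div_le_one (hpow j)).mpr (hD j).le
  have hbelow : Filter.IsBoundedUnder (· ≥ ·) Filter.atTop u := Filter.isBoundedUnder_of ⟨0, hu0⟩
  have habove : Filter.IsBoundedUnder (· ≤ ·) Filter.atTop u := Filter.isBoundedUnder_of ⟨1, hu1⟩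
  have hsmall : ∀ c > (0 : ℝ), ∀ᶠ j : ℕ in Filter.atTop, |Δ| ≤ c * (n : ℝ) ^ j := by
    intro c hc
    have := (tendsto_pow_atTop_atTop_of_one_lt hn1).const_mul_atTop hc
    exact this.eventually_ge_atTop _
  constructor
  · rintro ⟨c, hc, h⟩
    refine ⟨⟨c, hc, fun m k => ?_⟩, ?_, Filter.liminf_le_limsup habove hbelow, ?_⟩
    · have h1 := h (-(m : ℤ)) (-k)
      have h0 : (-(m : ℤ)).toNat = 0 := by omega
      rw [h0, hD0, zpow_neg, zpow_natCast] at h1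
      convert h1 using 2 <;> push_cast <;> ring
    · have hev : ∀ᶠ j : ℕ in Filter.atTop, c / 2 ≤ u j := by
        filter_upwards [hsmall (c / 2) (by positivity)] with j hj
        have h1 := h j 0
        simp only [Int.toNat_natCast, zpow_natCast, Int.cast_zero, zero_mul, add_zero] at h1
        rw [hu, le_div_iff₀ (hpow j)]
        linarith [abs_add_le Δ (D j : ℝ)]
      exact lt_of_lt_of_le (by positivity)
        (Filter.le_liminf_of_le habove.isCoboundedUnder_ge hev)
    · have hev : ∀ᶠ j : ℕ in Filter.atTop, u j ≤ 1 - c / 2 := by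
        filter_upwards [hsmall (c / 2) (by positivity)] with j hj
        rw [hu, div_le_iff₀ (hpow j)]
        have hDj := hD j
        -- Separation is used with `k = -1` or `k = 1`, opposite in sign to `D j`, so that
        -- `|D j + k * n ^ j| = n ^ j - |D j|`.
        rcases le_total 0 (D j : ℝ) with hs | hs
        · have h1 := h j (-1)
          simp only [Int.toNat_natCast, zpow_natCast, Int.cast_neg, Int.cast_one] at h1
          rw [abs_of_nonneg hs] at hDj ⊢
          have h2 := abs_add_le Δ (D j - (n : ℝ) ^ j)
          rw [abs_of_nonpos (by linarith : (D j - (n : ℝ) ^ j) ≤ 0)] at h2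
          rw [show Δ + D j + -1 * (n : ℝ) ^ j = Δ + (D j - (n : ℝ) ^ j) by ring] at h1
          linarith
        · have h1 := h j 1
          simp only [Int.toNat_natCast, zpow_natCast, Int.cast_one] at h1
          rw [abs_of_nonpos hs] at hDj ⊢
          have h2 := abs_add_le Δ (D j + (n : ℝ) ^ j)
          rw [abs_of_nonneg (by linarith : 0 ≤ (D j + (n : ℝ) ^ j))] at h2
          rw [show Δ + D j + 1 * (n : ℝ) ^ j = Δ + (D j + (n : ℝ) ^ j) by ring] at h1
          linarith
      exact lt_of_le_of_lt (Filter.limsup_le_of_le hbelow.isCoboundedUnder_le hev) (by linarith)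
  · rintro ⟨⟨c₀, hc₀, hfar⟩, hinf, -, hsup⟩
    obtain ⟨c₁, hc₁, hc₁'⟩ := exists_between hinf
    obtain ⟨c₂, hc₂, hc₂'⟩ := exists_between hsup
    set c' := min c₁ (1 - c₂) with hc'
    have hc'pos : 0 < c' := lt_min hc₁ (by linarith)
    obtain ⟨J, hJ⟩ := Filter.eventually_atTop.mp
      ((Filter.eventually_lt_of_lt_liminf hc₁' hbelow).and
        ((Filter.eventually_lt_of_limsup_lt hc₂ habove).and (hsmall (c' / 2) (by positivity))))
    have hint : ∀ k : ℤ, c₀ ≤ |Δ + k| := by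
      intro k
      simpa using hfar 0 (-k)
    refine ⟨min c₀ (min (c' / 2) (c₀ / (n : ℝ) ^ J)),
      lt_min hc₀ (lt_min (by positivity) (by positivity)), fun e k => ?_⟩
    rcases le_total e 0 with he | he
    · obtain ⟨m, rfl⟩ : ∃ m : ℕ, e = -(m : ℤ) := ⟨e.natAbs, by omega⟩
      have h0 : (-(m : ℤ)).toNat = 0 := by omega
      have h1 := hfar m (-k)
      rw [h0, hD0, zpow_neg, zpow_natCast]
      calc _ ≤ c₀ * ((n : ℝ) ^ m)⁻¹ := by
            gcongr
            exact min_le_left _ _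
        _ ≤ _ := by
            convert h1 using 2 <;> push_cast <;> ring
    · obtain ⟨j, rfl⟩ := Int.eq_ofNat_of_zero_le he
      simp only [Int.toNat_natCast, zpow_natCast]
      rcases le_total J j with hj | hj
      · obtain ⟨h1, h2, h3⟩ := hJ j hj
        rw [hu] at h1 h2
        simp only at h1 h2
        rw [lt_div_iff₀ (hpow j)] at h1
        rw [div_lt_iff₀ (hpow j)] at h2
        have hp := hpow j
        have h4 : c' * (n : ℝ) ^ j ≤ |D j + k * (n : ℝ) ^ j| := by
          by_cases hk : k = 0
          · subst hk
            have : c' * (n : ℝ) ^ j ≤ c₁ * (n : ℝ) ^ j := by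
              gcongr
              exact min_le_left _ _
            simp only [Int.cast_zero, zero_mul, add_zero]
            linarith
          · have h5 : c' * (n : ℝ) ^ j ≤ (1 - c₂) * (n : ℝ) ^ j := by
              gcongr
              exact min_le_right _ _
            have h6 : (1 : ℝ) ≤ |(k : ℝ)| := by exact_mod_cast Int.one_le_abs hk
            have h7 : (n : ℝ) ^ j ≤ |k * (n : ℝ) ^ j| := by
              rw [abs_mul, abs_of_pos hp]
              nlinarith
            have h8 := abs_sub_abs_le_abs_sub (k * (n : ℝ) ^ j) (-(D j : ℝ))
            rw [abs_neg, sub_neg_eq_add, add_comm (k * (n : ℝ) ^ j)] at h8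
            linarith
        have h5 : min c₀ (min (c' / 2) (c₀ / (n : ℝ) ^ J)) * (n : ℝ) ^ j ≤
            c' / 2 * (n : ℝ) ^ j := by
          gcongr
          exact (min_le_right _ _).trans (min_le_left _ _)
        have h6 := abs_sub_abs_le_abs_sub (D j + k * (n : ℝ) ^ j) (-Δ)
        rw [abs_neg, show D j + k * (n : ℝ) ^ j - -Δ = Δ + D j + k * (n : ℝ) ^ j by ring] at h6
        linarith
      · -- At the finitely many scales `n ^ j` with `j ≤ J`, distance from `ℤ` is enough.
        have h1 := hint (D j + k * (n : ℤ) ^ j)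
        push_cast at h1
        rw [← add_assoc] at h1
        refine le_trans ?_ h1
        calc _ ≤ c₀ / (n : ℝ) ^ J * (n : ℝ) ^ J := by
              gcongr
              · exact (min_le_right _ _).trans (min_le_right _ _)
              · exact hn1.le
          _ = c₀ := by field_simp

lemma wallSep_iff {n d : ℕ} (hn : 2 ≤ n) {δ₁ δ₂ : Fin d → ℝ} {a₁ a₂ : ℕ → Fin d → ℕ} {s : Fin d}
    (h₁ : ∀ j, a₁ j s < n) (h₂ : ∀ j, a₂ j s < n) :
    WallSep n d δ₁ δ₂ a₁ a₂ s ↔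
      IsNFar n (δ₁ s - δ₂ s) ∧
       (0 < Filter.liminf
            (fun j : ℕ => |(locFun n d a₁ j s : ℝ) - (locFun n d a₂ j s : ℝ)| / (n : ℝ) ^ j)
            Filter.atTop ∧
          Filter.liminf
            (fun j : ℕ => |(locFun n d a₁ j s : ℝ) - (locFun n d a₂ j s : ℝ)| / (n : ℝ) ^ j)
            Filter.atTop ≤
          Filter.limsup
            (fun j : ℕ => |(locFun n d a₁ j s : ℝ) - (locFun n d a₂ j s : ℝ)| / (n : ℝ) ^ j)
            Filter.atTop ∧
          Filter.limsup
            (fun j : ℕ => |(locFun n d a₁ j s : ℝ) - (locFun n d a₂ j s : ℝ)| / (n : ℝ) ^ j)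
            Filter.atTop < 1) := by
  have key := sep_iff hn (δ₁ s - δ₂ s) (fun j => locFun n d a₁ j s - locFun n d a₂ j s)
    (by simp [locFun]) (fun j => by
      have h3 := locFun_nonneg n d a₁ j s
      have h4 := locFun_nonneg n d a₂ j s
      have h5 := locFun_lt hn h₁ j
      have h6 := locFun_lt hn h₂ j
      have h7 : |locFun n d a₁ j s - locFun n d a₂ j s| < (n : ℤ) ^ j :=
        abs_lt.mpr ⟨by linarith, by linarith⟩
      exact_mod_cast h7)
  simp only [Int.cast_sub] at key
  rw [← key]
  refine exists_congr fun c => and_congr_right fun _ => ⟨fun h e k => ?_, ?_⟩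
  · have := h e _ _ ⟨k, rfl⟩ ⟨0, rfl⟩
    convert this using 2
    simp only [corner]
    push_cast
    ring
  · rintro h e _ _ ⟨k, rfl⟩ ⟨k', rfl⟩
    convert h e (k - k') using 2
    simp only [corner]
    push_cast
    ring

/-! ### The characterization of adjacency -/

/-- Main result (Theorem 1.5): the `d+1` grids `𝒢(δ_i, ℒ_{𝐚_i})` are adjacent iff all
pairwise coordinate differences of initial points are `n`-far and all normalized pairwise
coordinate differences of the location functions have liminf `> 0` and limsup `< 1`. -/
theorem stmt2 (n d : ℕ) (hn : 2 ≤ n) (hd : 1 ≤ d)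
    (δ : Fin (d + 1) → Fin d → ℝ) (a : Fin (d + 1) → ℕ → Fin d → ℕ)
    (ha : ∀ i j s, a i j s < n) :
    IsAdjacentFamily n d (d + 1) (fun i => GridRep n d (δ i) (a i)) ↔
      ((∀ l₁ l₂ : Fin (d + 1), l₁ ≠ l₂ → ∀ s : Fin d, IsNFar n (δ l₁ s - δ l₂ s)) ∧
       (∀ k₁ k₂ : Fin (d + 1), k₁ ≠ k₂ → ∀ s : Fin d,
          0 < Filter.liminf
              (fun j : ℕ => |(locFun n d (a k₁) j s : ℝ) - (locFun n d (a k₂) j s : ℝ)| / (n : ℝ) ^ j)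
              Filter.atTop ∧
          Filter.liminf
              (fun j : ℕ => |(locFun n d (a k₁) j s : ℝ) - (locFun n d (a k₂) j s : ℝ)| / (n : ℝ) ^ j)
              Filter.atTop ≤
            Filter.limsup
              (fun j : ℕ => |(locFun n d (a k₁) j s : ℝ) - (locFun n d (a k₂) j s : ℝ)| / (n : ℝ) ^ j)
              Filter.atTop ∧
          Filter.limsup
              (fun j : ℕ => |(locFun n d (a k₁) j s : ℝ) - (locFun n d (a k₂) j s : ℝ)| / (n : ℝ) ^ j)
              Filter.atTop < 1)) := by
  have key : IsAdjacentFamily n d (d + 1) (fun i => GridRep n d (δ i) (a i)) ↔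
      ∀ i j : Fin (d + 1), i ≠ j → ∀ s, WallSep n d (δ i) (δ j) (a i) (a j) s :=
    ⟨fun h _ _ hij s => wallSep_of_adjacent hn h hij s, adjacent_of_wallSep hn⟩
  rw [key]
  have hpair := fun (i j : Fin (d + 1)) (s : Fin d) =>
    wallSep_iff (δ₁ := δ i) (δ₂ := δ j) hn (fun m => ha i m s) (fun m => ha j m s)
  constructor
  · intro h
    exact ⟨fun i j hij s => ((hpair i j s).mp (h i j hij s)).1,
      fun i j hij s => ((hpair i j s).mp (h i j hij s)).2⟩
  · rintro ⟨h1, h2⟩ i j hij s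
    exact (hpair i j s).mpr ⟨h1 i j hij s, h2 i j hij s⟩
end

section
/- Let n ≥ 2 be an integer, δ_1, δ_2 ∈ ℝ, and let 𝐚_1 = (a_{1,j})_{j≥0}, 𝐚_2 = (a_{2,j})_{j≥0} be sequences of digits in {0,…,n−1} with location functions ℒ_{𝐚_1}, ℒ_{𝐚_2}. Then the one-dimensional n-adic grids 𝒢(δ_1, ℒ_{𝐚_1}) and 𝒢(δ_2, ℒ_{𝐚_2}) are adjacent on ℝ if and only if: (1) δ_1 − δ_2 is n-far; and (2) there exist 0 < C_1 ≤ C_2 < 1 such that liminf_{j→∞} |(ℒ_{𝐚_1}(j) − ℒ_{𝐚_2}(j))/n^j| = C_1 and limsup_{j→∞} |(ℒ_{𝐚_1}(j) − ℒ_{𝐚_2}(j))/n^j| = C_2. -/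
/-- `G` is an `n`-adic grid on `ℝ` (a collection of half-open intervals). -/
def IsNAdicGrid1 (n : ℕ) (G : Set (Set ℝ)) : Prop :=
  (∀ I ∈ G, ∃ (a : ℝ) (k : ℤ), I = Set.Ico a (a + (n : ℝ) ^ k)) ∧
  (∀ I ∈ G, ∀ J ∈ G, I ∩ J = I ∨ I ∩ J = J ∨ I ∩ J = ∅) ∧
  (∀ k : ℤ, ∀ y : ℝ, ∃! I, I ∈ G ∧ (∃ a : ℝ, I = Set.Ico a (a + (n : ℝ) ^ k)) ∧ y ∈ I)

/-- Two `n`-adic grids on `ℝ` are adjacent: there is `C > 0` such that every half-open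
interval is contained in some interval of one of the two grids of length at most `C` times
its own. -/
def AdjacentPair1 (n : ℕ) (G₁ G₂ : Set (Set ℝ)) : Prop :=
  ∃ C > (0 : ℝ), ∀ (x ℓ : ℝ), 0 < ℓ →
    ∃ J : Set ℝ, (J ∈ G₁ ∨ J ∈ G₂) ∧ Set.Ico x (x + ℓ) ⊆ J ∧
      ∃ (b s : ℝ), J = Set.Ico b (b + s) ∧ s ≤ C * ℓ

/-- One-dimensional location function `ℒ_𝐚(j) = Σ_{k<j} a_k n^k`. -/
def locFun1 (n : ℕ) (a : ℕ → ℕ) (j : ℕ) : ℤ :=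
  ∑ k ∈ Finset.range j, (a k : ℤ) * (n : ℤ) ^ k

/-- The one-dimensional `n`-adic grid `𝒢(δ, ℒ_𝐚)`. -/
def GridRep1 (n : ℕ) (δ : ℝ) (a : ℕ → ℕ) : Set (Set ℝ) :=
  {I | (∃ (m : ℕ) (k : ℤ),
          I = Set.Ico (δ + (k : ℝ) * (n : ℝ) ^ (-(m : ℤ)))
                (δ + (k : ℝ) * (n : ℝ) ^ (-(m : ℤ)) + (n : ℝ) ^ (-(m : ℤ)))) ∨
       (∃ (j : ℕ) (k : ℤ), 0 < j ∧
          I = Set.Ico (δ + (locFun1 n a j : ℝ) + (k : ℝ) * (n : ℝ) ^ (j : ℕ))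
                (δ + (locFun1 n a j : ℝ) + (k : ℝ) * (n : ℝ) ^ (j : ℕ) + (n : ℝ) ^ (j : ℕ)))}

open Filter Topology

/-- The base point of the intervals of length `n ^ p` in `𝒢(δ, ℒ_𝐚)`. Since `locFun1 n a 0 = 0`,
the truncation `Int.toNat` yields `δ` for all `p ≤ 0`. -/
noncomputable def gridOff (n : ℕ) (δ : ℝ) (a : ℕ → ℕ) (p : ℤ) : ℝ :=
  δ + (locFun1 n a p.toNat : ℝ)

/-- Endpoints of the two grids at each common scale `n ^ p` are at distance at least `c * n ^ p`. -/
def Separated (n : ℕ) (δ₁ δ₂ : ℝ) (a₁ a₂ : ℕ → ℕ) (c : ℝ) : Prop :=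
  ∀ p t : ℤ, c * (n : ℝ) ^ p ≤ |gridOff n δ₁ a₁ p - gridOff n δ₂ a₂ p - t * (n : ℝ) ^ p|

lemma mem_gridRep1 (n : ℕ) (δ : ℝ) (a : ℕ → ℕ) (I : Set ℝ) :
    I ∈ GridRep1 n δ a ↔ ∃ p k : ℤ, I = Set.Ico (gridOff n δ a p + k * (n : ℝ) ^ p)
      (gridOff n δ a p + k * (n : ℝ) ^ p + (n : ℝ) ^ p) := by
  constructor
  · rintro (⟨m, k, h⟩ | ⟨j, k, -, h⟩)
    · refine ⟨-(m : ℤ), k, ?_⟩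
      simpa [gridOff, locFun1] using h
    · exact ⟨j, k, by simpa [gridOff] using h⟩
  · rintro ⟨p, k, h⟩
    rcases le_or_gt p 0 with hp | hp
    · obtain ⟨m, rfl⟩ : ∃ m : ℕ, p = -(m : ℤ) := ⟨(-p).toNat, by omega⟩
      exact Or.inl ⟨m, k, by simpa [gridOff, locFun1] using h⟩
    · lift p to ℕ using hp.le
      exact Or.inr ⟨p, k, by exact_mod_cast hp, by simpa [gridOff] using h⟩

lemma locFun1_dvd (n : ℕ) (a : ℕ → ℕ) {i j : ℕ} (h : i ≤ j) :
    (n : ℤ) ^ i ∣ locFun1 n a j - locFun1 n a i := by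
  induction j, h using Nat.le_induction with
  | base => simp
  | succ j hj ih =>
    have : locFun1 n a (j + 1) - locFun1 n a i
        = (locFun1 n a j - locFun1 n a i) + (a j : ℤ) * (n : ℤ) ^ j := by
      simp only [locFun1, Finset.sum_range_succ]; ring
    rw [this]
    exact dvd_add ih ((pow_dvd_pow _ hj).mul_left _)

lemma zpow_eq_int_mul (n : ℕ) (hn : 2 ≤ n) {p q : ℤ} (h : p ≤ q) :
    ∃ u : ℤ, (n : ℝ) ^ q = u * (n : ℝ) ^ p := by
  have hn0 : (n : ℝ) ≠ 0 := by positivity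
  refine ⟨(n : ℤ) ^ (q - p).toNat, ?_⟩
  push_cast
  rw [← zpow_natCast, ← zpow_add₀ hn0, Int.toNat_of_nonneg (by omega)]
  congr 1; ring

/-- The endpoint sets are nested: endpoints at the scale `n ^ q` are endpoints at every
smaller scale `n ^ p`. -/
lemma endpoint_nested (n : ℕ) (hn : 2 ≤ n) (δ : ℝ) (a : ℕ → ℕ) {p q : ℤ} (h : p ≤ q) (t : ℤ) :
    ∃ t' : ℤ, gridOff n δ a q + t * (n : ℝ) ^ q = gridOff n δ a p + t' * (n : ℝ) ^ p := by
  obtain ⟨u, hu⟩ := zpow_eq_int_mul n hn h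
  obtain ⟨v, hv⟩ := zpow_eq_int_mul n hn (show p ≤ (p.toNat : ℤ) by omega)
  obtain ⟨w, hw⟩ := locFun1_dvd n a (show p.toNat ≤ q.toNat by omega)
  have hw' : (locFun1 n a q.toNat : ℝ) = locFun1 n a p.toNat + (n : ℝ) ^ p.toNat * w := by
    have : locFun1 n a q.toNat = locFun1 n a p.toNat + (n : ℤ) ^ p.toNat * w := by linarith
    rw [this]; push_cast; ring
  rw [zpow_natCast] at hv
  refine ⟨v * w + t * u, ?_⟩
  simp only [gridOff]
  rw [hw', hu, hv]; push_cast; ring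

/-- A grid interval containing `[x, x + ℓ)` is longer than `n ^ p` as soon as `(x, x + ℓ)` contains
an endpoint of the same grid at the scale `n ^ p`. -/
lemma scale_lt_of_endpoint (n : ℕ) (hn : 2 ≤ n) (δ : ℝ) (a : ℕ → ℕ) {p t : ℤ} {x ℓ b s : ℝ}
    (hJ : Set.Ico b (b + s) ∈ GridRep1 n δ a)
    (hsub : Set.Ico x (x + ℓ) ⊆ Set.Ico b (b + s))
    (h1 : x < gridOff n δ a p + t * (n : ℝ) ^ p)
    (h2 : gridOff n δ a p + t * (n : ℝ) ^ p < x + ℓ) : (n : ℝ) ^ p < s := by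
  have hn1 : (1 : ℝ) < n := by exact_mod_cast hn
  obtain ⟨q, k, hI⟩ := (mem_gridRep1 n δ a _).1 hJ
  have hq : (0 : ℝ) < (n : ℝ) ^ q := by positivity
  have hbs : b < b + s := by
    have := hsub (Set.left_mem_Ico.2 (by linarith : x < x + ℓ))
    exact this.1.trans_lt this.2
  obtain ⟨hb, hs⟩ := (Set.Ico_eq_Ico_iff (Or.inl hbs)).1 hI
  have hsq : s = (n : ℝ) ^ q := by linarith
  rw [hsq]
  refine zpow_lt_zpow_right₀ hn1 ?_
  by_contra hqp
  obtain ⟨t', ht'⟩ := endpoint_nested n hn δ a (not_lt.1 hqp) t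
  obtain ⟨g1, g2⟩ := (Set.Ico_subset_Ico_iff (by linarith : x < x + ℓ)).1 hsub
  have e1 : (k : ℝ) < t' := by
    refine lt_of_mul_lt_mul_right ?_ hq.le
    linarith
  have e2 : (t' : ℝ) < k + 1 := by
    refine lt_of_mul_lt_mul_right ?_ hq.le
    linarith
  have e1' : k < t' := by exact_mod_cast e1
  have e2' : t' < k + 1 := by exact_mod_cast e2
  omega

lemma exists_endpoint_or_subset (n : ℕ) (hn : 2 ≤ n) (δ : ℝ) (a : ℕ → ℕ) (p : ℤ) (x ℓ : ℝ) :
    (∃ b : ℝ, Set.Ico b (b + (n : ℝ) ^ p) ∈ GridRep1 n δ a ∧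
      Set.Ico x (x + ℓ) ⊆ Set.Ico b (b + (n : ℝ) ^ p)) ∨
    ∃ t : ℤ, x < gridOff n δ a p + t * (n : ℝ) ^ p ∧
      gridOff n δ a p + t * (n : ℝ) ^ p < x + ℓ := by
  have hp : (0 : ℝ) < (n : ℝ) ^ p := by positivity
  set k : ℤ := ⌊(x - gridOff n δ a p) / (n : ℝ) ^ p⌋ with hk
  have h1 : k * (n : ℝ) ^ p ≤ x - gridOff n δ a p := (le_div_iff₀ hp).1 (Int.floor_le _)
  have h2 : x - gridOff n δ a p < (k + 1) * (n : ℝ) ^ p := (div_lt_iff₀ hp).1 (Int.lt_floor_add_one _)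
  by_cases h : gridOff n δ a p + (k + 1 : ℤ) * (n : ℝ) ^ p < x + ℓ
  · right
    refine ⟨k + 1, ?_, h⟩
    push_cast; linarith
  · left
    refine ⟨gridOff n δ a p + k * (n : ℝ) ^ p, (mem_gridRep1 n δ a _).2 ⟨p, k, rfl⟩,
      Set.Ico_subset_Ico (by linarith) ?_⟩
    push_cast at h; linarith

lemma adjacent_iff_separated (n : ℕ) (hn : 2 ≤ n) (δ₁ δ₂ : ℝ) (a₁ a₂ : ℕ → ℕ) :
    AdjacentPair1 n (GridRep1 n δ₁ a₁) (GridRep1 n δ₂ a₂) ↔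
      ∃ c > 0, Separated n δ₁ δ₂ a₁ a₂ c := by
  have hn1 : (1 : ℝ) < n := by exact_mod_cast hn
  have hn0 : (0 : ℝ) < n := by linarith
  constructor
  · rintro ⟨C, hC, H⟩
    refine ⟨1 / C, by positivity, fun p t => ?_⟩
    by_contra! hlt
    set P : ℝ := (n : ℝ) ^ p
    set e₁ := gridOff n δ₁ a₁ p with he₁
    set e₂ := gridOff n δ₂ a₂ p + t * P with he₂
    have hd : e₁ - gridOff n δ₂ a₂ p - t * P = e₁ - e₂ := by rw [he₂]; ring
    rw [hd] at hlt
    -- `(x, x + ℓ)` contains both endpoints, with `ℓ` still smaller than `n ^ p / C`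
    obtain ⟨ε, hε⟩ : ∃ ε, ε = (1 / C * P - |e₁ - e₂|) / 2 := ⟨_, rfl⟩
    have hε0 : 0 < ε := by rw [hε]; linarith
    have habs : 0 ≤ |e₁ - e₂| := abs_nonneg _
    obtain ⟨J, hJ, hsub, b, s, rfl, hs⟩ := H (min e₁ e₂ - ε / 2) (|e₁ - e₂| + ε) (by linarith)
    have hsP : s < P := by
      have : C * (|e₁ - e₂| + ε) < C * (1 / C * P) := mul_lt_mul_of_pos_left (by linarith) hC
      have h2 : C * (1 / C * P) = P := by field_simp
      linarith
    have m1 := min_le_left e₁ e₂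
    have m2 := min_le_right e₁ e₂
    have m3 : e₁ ≤ min e₁ e₂ + |e₁ - e₂| := by
      rcases min_choice e₁ e₂ with h | h <;> rw [h] <;> linarith [le_abs_self (e₁ - e₂)]
    have m4 : e₂ ≤ min e₁ e₂ + |e₁ - e₂| := by
      rcases min_choice e₁ e₂ with h | h <;> rw [h] <;> linarith [neg_abs_le (e₁ - e₂)]
    rcases hJ with hJ | hJ
    · exact lt_asymm hsP (scale_lt_of_endpoint n hn δ₁ a₁ (p := p) (t := 0) hJ hsub
        (by push_cast; linarith) (by push_cast; linarith))
    · exact lt_asymm hsP (scale_lt_of_endpoint n hn δ₂ a₂ (p := p) (t := t) hJ hsub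
        (by linarith) (by linarith))
  · rintro ⟨c, hc, H⟩
    refine ⟨n / c, by positivity, fun x ℓ hℓ => ?_⟩
    -- the scale `n ^ p` with `n ^ (p - 1) ≤ ℓ / c < n ^ p`
    obtain ⟨p, hp1, hp2⟩ := exists_mem_Ico_zpow (show 0 < ℓ / c by positivity) hn1
    have hlt : ℓ < c * (n : ℝ) ^ (p + 1) := by rwa [div_lt_iff₀' hc] at hp2
    have hle : (n : ℝ) ^ (p + 1) ≤ n / c * ℓ := by
      rw [zpow_add_one₀ hn0.ne']
      calc (n : ℝ) ^ p * n ≤ ℓ / c * n := by gcongr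
        _ = n / c * ℓ := by ring
    rcases exists_endpoint_or_subset n hn δ₁ a₁ (p + 1) x ℓ with ⟨b, hb, hs⟩ | ⟨t₁, h1, h2⟩
    · exact ⟨_, Or.inl hb, hs, b, _, rfl, hle⟩
    rcases exists_endpoint_or_subset n hn δ₂ a₂ (p + 1) x ℓ with ⟨b, hb, hs⟩ | ⟨t₂, h3, h4⟩
    · exact ⟨_, Or.inr hb, hs, b, _, rfl, hle⟩
    exfalso
    have := H (p + 1) (t₂ - t₁)
    have h5 : |gridOff n δ₁ a₁ (p + 1) - gridOff n δ₂ a₂ (p + 1)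
        - ((t₂ - t₁ : ℤ) : ℝ) * (n : ℝ) ^ (p + 1)| < ℓ := by
      push_cast
      rw [abs_lt]; constructor <;> linarith
    linarith

lemma locFun1_nonneg (n : ℕ) (a : ℕ → ℕ) (j : ℕ) : 0 ≤ locFun1 n a j :=
  Finset.sum_nonneg fun _ _ => by positivity

lemma locFun1_lt (n : ℕ) (a : ℕ → ℕ) (ha : ∀ j, a j < n) (j : ℕ) :
    locFun1 n a j < (n : ℤ) ^ j := by
  induction j with
  | zero => simp [locFun1]
  | succ j ih =>
    have h1 : locFun1 n a (j + 1) = locFun1 n a j + (a j : ℤ) * (n : ℤ) ^ j := by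
      simp only [locFun1, Finset.sum_range_succ]
    have h2 : (a j : ℤ) + 1 ≤ n := by exact_mod_cast ha j
    have h3 : (0 : ℤ) ≤ (n : ℤ) ^ j := by positivity
    rw [h1, pow_succ]
    nlinarith

lemma abs_locFun1_sub_div_lt_one (n : ℕ) (hn : 2 ≤ n) (a₁ a₂ : ℕ → ℕ)
    (ha₁ : ∀ j, a₁ j < n) (ha₂ : ∀ j, a₂ j < n) (j : ℕ) :
    |(locFun1 n a₁ j : ℝ) - (locFun1 n a₂ j : ℝ)| / (n : ℝ) ^ j < 1 := by
  have hp : (0 : ℝ) < (n : ℝ) ^ j := by positivity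
  rw [div_lt_one hp]
  have h : |locFun1 n a₁ j - locFun1 n a₂ j| < (n : ℤ) ^ j := by
    have := locFun1_nonneg n a₁ j
    have := locFun1_nonneg n a₂ j
    have := locFun1_lt n a₁ ha₁ j
    have := locFun1_lt n a₂ ha₂ j
    rw [abs_lt]; constructor <;> linarith
  exact_mod_cast h

/-- If `c ≤ |u| ≤ 1 - c`, then `u` is at distance at least `c` from every integer. -/
lemma dist_int_ge {u c : ℝ} (h0 : c ≤ |u|) (h1 : |u| ≤ 1 - c) (t : ℤ) : c ≤ |u - t| := by
  rcases eq_or_ne t 0 with rfl | ht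
  · simpa using h0
  · have : (1 : ℝ) ≤ |(t : ℝ)| := by exact_mod_cast Int.one_le_abs ht
    have h2 := abs_sub_abs_le_abs_sub (t : ℝ) u
    rw [abs_sub_comm] at h2
    linarith

/-- At the scale `n ^ j`, the separation inequality divided by `n ^ j`. -/
lemma separated_nat_iff (n : ℕ) (hn : 2 ≤ n) (δ₁ δ₂ : ℝ) (a₁ a₂ : ℕ → ℕ) (c : ℝ) (j : ℕ) (t : ℤ) :
    c * (n : ℝ) ^ (j : ℤ) ≤
        |gridOff n δ₁ a₁ j - gridOff n δ₂ a₂ j - t * (n : ℝ) ^ (j : ℤ)| ↔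
      c ≤ |((locFun1 n a₁ j : ℝ) - (locFun1 n a₂ j : ℝ)) / (n : ℝ) ^ j - t
        + (δ₁ - δ₂) / (n : ℝ) ^ j| := by
  have hp : (0 : ℝ) < (n : ℝ) ^ j := by positivity
  have : gridOff n δ₁ a₁ j - gridOff n δ₂ a₂ j - t * (n : ℝ) ^ (j : ℤ) =
      (((locFun1 n a₁ j : ℝ) - (locFun1 n a₂ j : ℝ)) / (n : ℝ) ^ j - t
        + (δ₁ - δ₂) / (n : ℝ) ^ j) * (n : ℝ) ^ j := by
    simp only [gridOff, zpow_natCast, Int.toNat_natCast]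
    field_simp
    ring
  rw [this, abs_mul, abs_of_pos hp, zpow_natCast, mul_le_mul_iff_left₀ hp]

lemma separated_iff (n : ℕ) (hn : 2 ≤ n) (δ₁ δ₂ : ℝ) (a₁ a₂ : ℕ → ℕ)
    (ha₁ : ∀ j, a₁ j < n) (ha₂ : ∀ j, a₂ j < n) :
    (∃ c > 0, Separated n δ₁ δ₂ a₁ a₂ c) ↔
      IsNFar n (δ₁ - δ₂) ∧ ∃ c > 0, ∀ᶠ j : ℕ in atTop,
        c ≤ |(locFun1 n a₁ j : ℝ) - (locFun1 n a₂ j : ℝ)| / (n : ℝ) ^ j ∧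
        |(locFun1 n a₁ j : ℝ) - (locFun1 n a₂ j : ℝ)| / (n : ℝ) ^ j ≤ 1 - c := by
  have hn1 : (1 : ℝ) < n := by exact_mod_cast hn
  have hn0 : (0 : ℝ) < n := by linarith
  have hlim : Tendsto (fun j : ℕ => (δ₁ - δ₂) / (n : ℝ) ^ j) atTop (𝓝 0) :=
    tendsto_const_nhds.div_atTop (tendsto_pow_atTop_atTop_of_one_lt hn1)
  have hsmall : ∀ c > 0, ∀ᶠ j : ℕ in atTop, |(δ₁ - δ₂) / (n : ℝ) ^ j| < c := fun c hc => by
    simpa using (tendsto_order.1 hlim.abs).2 c (by simpa using hc)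
  have habs : ∀ j : ℕ, |(locFun1 n a₁ j : ℝ) - (locFun1 n a₂ j : ℝ)| / (n : ℝ) ^ j =
      |((locFun1 n a₁ j : ℝ) - (locFun1 n a₂ j : ℝ)) / (n : ℝ) ^ j| := fun j => by
    rw [abs_div, abs_of_pos (show (0 : ℝ) < (n : ℝ) ^ j by positivity)]
  have hmul : ∀ m : ℕ, (n : ℝ) ^ (-(m : ℤ)) = 1 / (n : ℝ) ^ m := fun m => by
    rw [zpow_neg, zpow_natCast, one_div]
  constructor
  · rintro ⟨c, hc, H⟩
    refine ⟨⟨c, hc, fun m k => ?_⟩, c / 2, by positivity, ?_⟩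
    · have := H (-(m : ℤ)) k
      simp only [gridOff, hmul] at this
      simpa [locFun1, div_eq_mul_inv] using this
    · filter_upwards [hsmall (c / 2) (by positivity)] with j hj
      have hu := abs_locFun1_sub_div_lt_one n hn a₁ a₂ ha₁ ha₂ j
      rw [habs] at hu ⊢
      have h := fun t : ℤ => (separated_nat_iff n hn δ₁ δ₂ a₁ a₂ c j t).1 (H j t)
      have h' : ∀ t : ℤ, c / 2 ≤
          |((locFun1 n a₁ j : ℝ) - (locFun1 n a₂ j : ℝ)) / (n : ℝ) ^ j - t| := fun t => by
        have := abs_add_le (((locFun1 n a₁ j : ℝ) - (locFun1 n a₂ j : ℝ)) / (n : ℝ) ^ j - t)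
          ((δ₁ - δ₂) / (n : ℝ) ^ j)
        linarith [h t]
      set u := ((locFun1 n a₁ j : ℝ) - (locFun1 n a₂ j : ℝ)) / (n : ℝ) ^ j
      have hzero := h' 0
      refine ⟨by simpa using hzero, ?_⟩
      -- the integer `±1` of the same sign as `u` is at distance `1 - |u|` from `u`
      obtain ⟨hu1, hu2⟩ := abs_lt.1 hu
      rcases le_total 0 u with h0 | h0
      · have := h' 1
        rw [abs_of_nonpos (by push_cast; linarith)] at this
        rw [abs_of_nonneg h0]
        push_cast at this; linarith
      · have := h' (-1)
        rw [abs_of_nonneg (by push_cast; linarith)] at this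
        rw [abs_of_nonpos h0]
        push_cast at this; linarith
  · rintro ⟨⟨C, hC, hfar⟩, c, hc, hev⟩
    obtain ⟨N, hN⟩ := eventually_atTop.1 (hev.and (hsmall (c / 2) (by positivity)))
    have hnN : (1 : ℝ) ≤ (n : ℝ) ^ N := one_le_pow₀ hn1.le
    have hCN : C / (n : ℝ) ^ N ≤ C := div_le_self hC.le hnN
    refine ⟨min (c / 2) (C / (n : ℝ) ^ N), lt_min (by positivity) (by positivity), fun p t => ?_⟩
    rcases le_total p 0 with hp | hp
    · obtain ⟨m, rfl⟩ : ∃ m : ℕ, p = -(m : ℤ) := ⟨(-p).toNat, by omega⟩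
      have h1 := hfar m t
      have h2 : |gridOff n δ₁ a₁ (-(m : ℤ)) - gridOff n δ₂ a₂ (-(m : ℤ)) - t * (n : ℝ) ^ (-(m : ℤ))|
          = |δ₁ - δ₂ - t / (n : ℝ) ^ m| := by
        simp [gridOff, locFun1, div_eq_mul_inv]
      rw [h2, hmul, mul_one_div]
      refine le_trans ?_ h1
      gcongr
      exact (min_le_right _ _).trans hCN
    · lift p to ℕ using hp
      rcases le_total N p with hNp | hNp
      · rw [separated_nat_iff n hn]
        obtain ⟨⟨h1, h2⟩, h3⟩ := hN p hNp
        rw [habs] at h1 h2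
        have h4 := dist_int_ge h1 h2 t
        have h5 := abs_sub_abs_le_abs_add (((locFun1 n a₁ p : ℝ) - (locFun1 n a₂ p : ℝ)) / (n : ℝ) ^ p - t)
          ((δ₁ - δ₂) / (n : ℝ) ^ p)
        linarith [min_le_left (c / 2) (C / (n : ℝ) ^ N)]
      · -- the quantity is the distance from `δ₁ - δ₂` to an integer, at least `C`
        have h1 := hfar 0 (locFun1 n a₂ p - locFun1 n a₁ p + t * (n : ℤ) ^ p)
        have h2 : gridOff n δ₁ a₁ p - gridOff n δ₂ a₂ p - t * (n : ℝ) ^ (p : ℤ) =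
            δ₁ - δ₂ - ((locFun1 n a₂ p - locFun1 n a₁ p + t * (n : ℤ) ^ p : ℤ) : ℝ) / (n : ℝ) ^ 0 := by
          simp only [gridOff, zpow_natCast, Int.toNat_natCast]
          push_cast; ring
        rw [h2]
        refine le_trans ?_ h1
        rw [zpow_natCast, pow_zero, div_one]
        calc min (c / 2) (C / (n : ℝ) ^ N) * (n : ℝ) ^ p
            ≤ C / (n : ℝ) ^ N * (n : ℝ) ^ N := by
              gcongr
              · exact min_le_right _ _
              · exact hn1.le
          _ = C := by field_simp

/-- For a sequence with values in `[0, 1]`, the liminf and limsup lie in `(0, 1)` exactly when the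
sequence is eventually bounded away from `0` and `1`. -/
lemma liminf_limsup_iff (u : ℕ → ℝ) (h0 : ∀ j, 0 ≤ u j) (h1 : ∀ j, u j ≤ 1) :
    (∃ c > 0, ∀ᶠ j : ℕ in atTop, c ≤ u j ∧ u j ≤ 1 - c) ↔
      ∃ C₁ C₂ : ℝ, 0 < C₁ ∧ C₁ ≤ C₂ ∧ C₂ < 1 ∧ liminf u atTop = C₁ ∧ limsup u atTop = C₂ := by
  have hb : IsBoundedUnder (· ≤ ·) atTop u := isBoundedUnder_of ⟨1, h1⟩
  have hb' : IsBoundedUnder (· ≥ ·) atTop u := isBoundedUnder_of ⟨0, h0⟩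
  constructor
  · rintro ⟨c, hc, hev⟩
    have k1 : c ≤ liminf u atTop :=
      le_liminf_of_le hb.isCoboundedUnder_ge (hev.mono fun j hj => hj.1)
    have k2 : limsup u atTop ≤ 1 - c :=
      limsup_le_of_le hb'.isCoboundedUnder_le (hev.mono fun j hj => hj.2)
    exact ⟨_, _, by linarith, liminf_le_limsup hb hb', by linarith, rfl, rfl⟩
  · rintro ⟨C₁, C₂, hC₁, -, hC₂, hl, hs⟩
    have k1 : ∀ᶠ j in atTop, C₁ / 2 < u j := eventually_lt_of_lt_liminf (by rw [hl]; linarith) hb'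
    have k2 : ∀ᶠ j in atTop, u j < (1 + C₂) / 2 :=
      eventually_lt_of_limsup_lt (by rw [hs]; linarith) hb
    refine ⟨min (C₁ / 2) ((1 - C₂) / 2), lt_min (by linarith) (by linarith), ?_⟩
    filter_upwards [k1, k2] with j h h'
    have := min_le_left (C₁ / 2) ((1 - C₂) / 2)
    have := min_le_right (C₁ / 2) ((1 - C₂) / 2)
    constructor <;> linarith

/-- One-dimensional characterization of adjacency (Theorem 2.3 / [AHJOW, Theorem 3.8]). -/
theorem stmt4 (n : ℕ) (hn : 2 ≤ n) (δ₁ δ₂ : ℝ) (a₁ a₂ : ℕ → ℕ)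
    (ha₁ : ∀ j, a₁ j < n) (ha₂ : ∀ j, a₂ j < n) :
    AdjacentPair1 n (GridRep1 n δ₁ a₁) (GridRep1 n δ₂ a₂) ↔
      (IsNFar n (δ₁ - δ₂) ∧
       ∃ C₁ C₂ : ℝ, 0 < C₁ ∧ C₁ ≤ C₂ ∧ C₂ < 1 ∧
         Filter.liminf
             (fun j : ℕ => |(locFun1 n a₁ j : ℝ) - (locFun1 n a₂ j : ℝ)| / (n : ℝ) ^ j)
             Filter.atTop = C₁ ∧
         Filter.limsup
             (fun j : ℕ => |(locFun1 n a₁ j : ℝ) - (locFun1 n a₂ j : ℝ)| / (n : ℝ) ^ j)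
             Filter.atTop = C₂) := by
  rw [adjacent_iff_separated n hn, separated_iff n hn δ₁ δ₂ a₁ a₂ ha₁ ha₂]
  exact and_congr_right fun _ => liminf_limsup_iff _ (fun j => by positivity)
    fun j => (abs_locFun1_sub_div_lt_one n hn a₁ a₂ ha₁ ha₂ j).le
end

section
/- Let n ≥ 2 be an integer and δ ∈ ℝ, and let {δ} := dist(δ, ℤ) ∈ [0, 1/2] denote the distance from δ to the nearest integer. Then δ is n-far if and only if T({δ}) is finite, where for x ∈ [0,1), T(x) is the supremum of the lengths of blocks of consecutive digits that are all equal to 0 or all equal to n−1 in a base-n digit expansion x = Σ_{k≥1} d_k n^{−k}, d_k ∈ {0,…,n−1} (the finiteness of T(x) does not depend on the choice of expansion when two expansions exist). -/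
/-- If a sequence in `[0, 1]` satisfies the recursion of the tails of a base-`n` expansion with
digits `d`, it is bounded away from `0` iff blocks of zero digits have bounded length. The digits
are only assumed to be nonnegative integers, so that the lemma also applies to the reflected digits
`n - 1 - d`. -/
lemma tails_bounded_below_iff {n : ℕ} (hn : 2 ≤ n) (t : ℕ → ℝ) (d : ℕ → ℤ)
    (h0 : ∀ k, 0 ≤ t k) (h1 : ∀ k, t k ≤ 1) (hd : ∀ k, 0 ≤ d k)
    (hrec : ∀ k, (n : ℝ) * t k = d k + t (k + 1)) :
    (∃ C > 0, ∀ k, C ≤ t k) ↔ ∃ L : ℕ, ∀ k, ∃ i < L, d (k + i) ≠ 0 := by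
  have hn1 : (1 : ℝ) < n := by exact_mod_cast hn
  have hn0 : (0 : ℝ) < n := by linarith
  constructor
  · rintro ⟨C, hC, h⟩
    obtain ⟨L, hL⟩ := pow_unbounded_of_one_lt (1 / C) hn1
    refine ⟨L, fun k => ?_⟩
    by_contra! hz
    have key : ∀ j ≤ L, (n : ℝ) ^ j * t k = t (k + j) := by
      intro j
      induction j with
      | zero => simp
      | succ j ih =>
        intro hj
        have hr := hrec (k + j)
        rw [hz j (by omega)] at hr
        rw [pow_succ', mul_assoc, ih (by omega), hr]
        simp [add_assoc]
    have hk := key L le_rfl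
    have h2 := h1 (k + L)
    rw [div_lt_iff₀ hC] at hL
    have h3 : (n : ℝ) ^ L * C ≤ (n : ℝ) ^ L * t k := by gcongr; exact h k
    linarith
  · rintro ⟨L, h⟩
    have key : ∀ i k, d (k + i) ≠ 0 → 1 ≤ (n : ℝ) ^ (i + 1) * t k := by
      intro i
      induction i with
      | zero =>
        intro k hk
        have hd1 : (1 : ℤ) ≤ d k := by
          have := hd k
          simp only [add_zero] at hk
          omega
        have : (1 : ℝ) ≤ d k := by exact_mod_cast hd1
        have := h0 (k + 1)
        rw [zero_add, pow_one, hrec]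
        linarith
      | succ i ih =>
        intro k hk
        have h2 := ih (k + 1) (by rwa [add_assoc, add_comm 1 i])
        have h3 : (0 : ℝ) ≤ d k := by exact_mod_cast hd k
        rw [pow_succ, mul_assoc, hrec k]
        refine h2.trans ?_
        gcongr
        linarith
    refine ⟨1 / (n : ℝ) ^ L, by positivity, fun k => ?_⟩
    obtain ⟨i, hi, hk⟩ := h k
    rw [div_le_iff₀' (by positivity)]
    refine (key i k hk).trans ?_
    have := h0 k
    gcongr
    · exact hn1.le
    · omega

/-- Up to an integer, `n ^ m * x` is the `m`-th tail of the expansion of `x`. -/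
lemma exists_int_pow_mul_ofDigits {n : ℕ} (hn : 2 ≤ n) (a : ℕ → Fin n) (m : ℕ) :
    ∃ K : ℤ, (n : ℝ) ^ m * Real.ofDigits a = K + Real.ofDigits (fun i => a (i + m)) := by
  have hn0 : (n : ℝ) ≠ 0 := by positivity
  refine ⟨∑ i ∈ Finset.range m, ((a i : ℕ) : ℤ) * (n : ℤ) ^ (m - 1 - i), ?_⟩
  rw [Real.ofDigits_eq_sum_add_ofDigits a m, mul_add, ← mul_assoc,
    mul_inv_cancel₀ (by positivity), one_mul, Finset.mul_sum]
  push_cast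
  congr 1
  refine Finset.sum_congr rfl fun i hi => ?_
  rw [Finset.mem_range] at hi
  have h : (n : ℝ) ^ m = (n : ℝ) ^ (m - 1 - i) * (n : ℝ) ^ (i + 1) := by
    rw [← pow_add]
    congr 1
    omega
  rw [Real.ofDigitsTerm, h]
  field_simp

lemma isNFar_ofDigits_iff_tails {n : ℕ} (hn : 2 ≤ n) (a : ℕ → Fin n) :
    IsNFar n (Real.ofDigits a) ↔
      (∃ C > 0, ∀ m, C ≤ Real.ofDigits (fun i => a (i + m))) ∧
        ∃ C > 0, ∀ m, C ≤ 1 - Real.ofDigits (fun i => a (i + m)) := by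
  have hp : ∀ m : ℕ, (0 : ℝ) < (n : ℝ) ^ m := fun m => by positivity
  have scale : ∀ (C : ℝ) (m : ℕ) (k : ℤ),
      C / (n : ℝ) ^ m ≤ |Real.ofDigits a - (k : ℝ) / (n : ℝ) ^ m| ↔
        C ≤ |(n : ℝ) ^ m * Real.ofDigits a - k| := by
    intro C m k
    have h : (n : ℝ) ^ m * Real.ofDigits a - k =
        (Real.ofDigits a - (k : ℝ) / (n : ℝ) ^ m) * (n : ℝ) ^ m := by
      field_simp [(hp m).ne']
    rw [div_le_iff₀ (hp m), h, abs_mul, abs_of_pos (hp m)]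
  simp only [IsNFar, scale]
  have ht0 := fun m => Real.ofDigits_nonneg (fun i => a (i + m))
  have ht1 := fun m => Real.ofDigits_le_one (fun i => a (i + m))
  constructor
  · rintro ⟨C, hC, h⟩
    refine ⟨⟨C, hC, fun m => ?_⟩, ⟨C, hC, fun m => ?_⟩⟩
    · obtain ⟨K, hK⟩ := exists_int_pow_mul_ofDigits hn a m
      have := h m K
      rwa [hK, add_sub_cancel_left, abs_of_nonneg (ht0 m)] at this
    · obtain ⟨K, hK⟩ := exists_int_pow_mul_ofDigits hn a m
      have := h m (K + 1)
      rw [hK, abs_of_nonpos (by push_cast; linarith [ht1 m])] at this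
      push_cast at this
      linarith
  · rintro ⟨⟨C, hC, h⟩, ⟨D, hD, h'⟩⟩
    refine ⟨min C D, lt_min hC hD, fun m k => ?_⟩
    obtain ⟨K, hK⟩ := exists_int_pow_mul_ofDigits hn a m
    rw [hK]
    rcases le_or_gt k K with hk | hk
    · have hk' : (k : ℝ) ≤ K := by exact_mod_cast hk
      refine (min_le_left C D).trans (le_trans ?_ (le_abs_self _))
      linarith [h m]
    · have hk' : (K : ℝ) + 1 ≤ k := by exact_mod_cast hk
      refine (min_le_right C D).trans (le_trans ?_ (neg_le_abs _))
      linarith [h' m]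

lemma isNFar_ofDigits_iff {n : ℕ} (hn : 2 ≤ n) (a : ℕ → Fin n) :
    IsNFar n (Real.ofDigits a) ↔
      ∃ L : ℕ, ∀ k, (∃ i < L, (a (k + i) : ℕ) ≠ 0) ∧ ∃ i < L, (a (k + i) : ℕ) ≠ n - 1 := by
  have hn0 : (n : ℝ) ≠ 0 := by positivity
  have hrec : ∀ k, (n : ℝ) * Real.ofDigits (fun i => a (i + k)) =
      (((a k : ℕ) : ℤ) : ℝ) + Real.ofDigits (fun i => a (i + (k + 1))) := by
    intro k
    rw [Real.ofDigits_eq_sum_add_ofDigits (fun i => a (i + k)) 1]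
    simp only [Finset.sum_range_one, Real.ofDigitsTerm, add_assoc, add_comm 1 k]
    field_simp
    simp [mul_add]
  have ht0 := fun m => Real.ofDigits_nonneg (fun i => a (i + m))
  have ht1 := fun m => Real.ofDigits_le_one (fun i => a (i + m))
  have hlt : ∀ k, (a k : ℕ) < n := fun k => (a k).isLt
  rw [isNFar_ofDigits_iff_tails hn,
    tails_bounded_below_iff hn _ (fun k => ((a k : ℕ) : ℤ)) ht0 ht1 (fun k => by positivity) hrec,
    tails_bounded_below_iff hn (fun m => 1 - Real.ofDigits (fun i => a (i + m)))
      (fun k => (n : ℤ) - 1 - (a k : ℕ)) (fun k => by linarith [ht1 k])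
      (fun k => by linarith [ht0 k]) (fun k => by have := hlt k; omega)
      (fun k => by have := hrec k; push_cast at this ⊢; linarith)]
  constructor
  · rintro ⟨⟨L, h⟩, ⟨M, h'⟩⟩
    refine ⟨max L M, fun k => ⟨?_, ?_⟩⟩
    · obtain ⟨i, hi, hk⟩ := h k
      exact ⟨i, hi.trans_le (le_max_left _ _), by omega⟩
    · obtain ⟨i, hi, hk⟩ := h' k
      exact ⟨i, hi.trans_le (le_max_right _ _), by omega⟩
  · rintro ⟨L, h⟩
    refine ⟨⟨L, fun k => ?_⟩, ⟨L, fun k => ?_⟩⟩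
    · obtain ⟨i, hi, hk⟩ := (h k).1
      exact ⟨i, hi, by omega⟩
    · obtain ⟨i, hi, hk⟩ := (h k).2
      exact ⟨i, hi, by omega⟩

lemma IsNFar.neg {n : ℕ} {x : ℝ} (h : IsNFar n x) : IsNFar n (-x) := by
  obtain ⟨C, hC, h⟩ := h
  refine ⟨C, hC, fun m k => (h m (-k)).trans_eq ?_⟩
  rw [← abs_neg]
  congr 1
  push_cast
  ring

lemma IsNFar.sub_int {n : ℕ} (hn : 2 ≤ n) {x : ℝ} (h : IsNFar n x) (r : ℤ) :
    IsNFar n (x - r) := by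
  obtain ⟨C, hC, h⟩ := h
  refine ⟨C, hC, fun m k => (h m (k + r * (n : ℤ) ^ m)).trans_eq ?_⟩
  have : (n : ℝ) ^ m ≠ 0 := by positivity
  congr 1
  push_cast
  field_simp
  ring

lemma isNFar_abs_sub_round_iff {n : ℕ} (hn : 2 ≤ n) (δ : ℝ) :
    IsNFar n |δ - round δ| ↔ IsNFar n δ := by
  have hs : IsNFar n (δ - round δ) ↔ IsNFar n δ :=
    ⟨fun h => by simpa using h.sub_int hn (-round δ), fun h => h.sub_int hn _⟩
  rw [← hs]
  rcases abs_choice (δ - round δ) with h | h <;> rw [h]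
  exact ⟨fun h => by simpa using h.neg, fun h => h.neg⟩

/-- `δ` is `n`-far iff `T({δ})` is finite, where `{δ} = |δ - round δ|` is the distance from
`δ` to the nearest integer and `T(x)` is the supremum of the lengths of blocks of
consecutive digits all equal to `0` or all equal to `n-1` in a base-`n` expansion
`x = Σ_{k≥1} d_k n^{-k}`.  Finiteness of `T(x)` is expressed as: there is an `L` such that
every starting index `k ≥ 1` admits, within the next `L` digits, a digit `≠ 0` and a digit
`≠ n-1`. -/
theorem stmt5 (n : ℕ) (hn : 2 ≤ n) (δ : ℝ) :
    IsNFar n δ ↔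
      ∀ dig : ℕ → ℕ, (∀ k, dig k < n) →
        |δ - round δ| = (∑' k : ℕ, (dig (k + 1) : ℝ) / (n : ℝ) ^ (k + 1)) →
        ∃ L : ℕ, ∀ k : ℕ, 1 ≤ k →
          (∃ i < L, dig (k + i) ≠ 0) ∧ (∃ i < L, dig (k + i) ≠ n - 1) := by
  have htsum : ∀ a : ℕ → Fin n,
      Real.ofDigits a = ∑' k : ℕ, ((a k : ℕ) : ℝ) / (n : ℝ) ^ (k + 1) := fun a => by
    simp only [Real.ofDigits, Real.ofDigitsTerm, div_eq_mul_inv]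
  rw [← isNFar_abs_sub_round_iff hn]
  constructor
  · intro h dig hdig hx
    have hx' : |δ - round δ| = Real.ofDigits (fun k => (⟨dig (k + 1), hdig _⟩ : Fin n)) := by
      rw [hx, htsum]
    rw [hx', isNFar_ofDigits_iff hn] at h
    obtain ⟨L, hL⟩ := h
    refine ⟨L, fun k hk => ?_⟩
    obtain ⟨j, rfl⟩ : ∃ j, k = j + 1 := ⟨k - 1, by omega⟩
    simpa only [add_right_comm] using hL j
  · intro h
    have : NeZero n := ⟨by omega⟩
    have hx : |δ - round δ| ∈ Set.Ico (0 : ℝ) 1 :=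
      ⟨abs_nonneg _, (abs_sub_round δ).trans_lt (by norm_num)⟩
    have hx' := Real.ofDigits_digits (b := n) (by omega) hx
    set a := Real.digits |δ - round δ| n
    -- The digits in the statement are indexed from `1`; the entry at `0` is arbitrary.
    obtain ⟨L, hL⟩ := h (fun k => a (k - 1)) (fun k => (a _).isLt) (by
      rw [← hx', htsum]
      simp)
    rw [← hx', isNFar_ofDigits_iff hn]
    refine ⟨L, fun k => ?_⟩
    simpa [add_right_comm] using hL (k + 1) (by omega)
end

section
/- Let n ≥ 2, d ≥ 1 be integers, δ ∈ ℝ^d, and let 𝐚 = (a_j)_{j≥0} be a sequence with a_j ∈ {0,…,n−1}^d, with location function ℒ_𝐚. Then the collection of cubes 𝒢(δ, ℒ_𝐚) is an n-adic grid in ℝ^d: every cube in it has sidelength n^k for some k ∈ ℤ; any two of its cubes Q, R satisfy Q ∩ R ∈ {Q, R, ∅}; and for each k ∈ ℤ its cubes of sidelength n^k form a partition of ℝ^d. -/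
/-!
A point `y` lies in the cube of sidelength `n ^ g` indexed by `k` exactly when, in each coordinate,
`k` is the floor of `(y - δ - ℒ_𝐚(g⁺)) / n ^ g`, where `g⁺ = max g 0` (`mem_gridCube`). Hence the
cubes of a fixed sidelength partition `ℝ^d`. For nestedness, `ℒ_𝐚((g + 1)⁺) - ℒ_𝐚(g⁺)` is an
integer multiple of `n ^ g`, so the index of `y` in generation `g + 1` is an integer function of its
index in generation `g` (`gridIdx_succ`, using `⌊x / n⌋ = ⌊x⌋ / n`). Two points sharing a cube
therefore share all larger cubes, and two cubes which meet are nested. Finally, as `d ≥ 1`, a cube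
determines its sidelength, which identifies the cubes of sidelength `n ^ k` with those of one
generation.
-/

open scoped BigOperators

/-- The cube of sidelength `n ^ g` and index `k` of `𝒢(δ, ℒ_𝐚)`, with the two cases of `GridRep`
merged: `g.toNat = 0` for `g ≤ 0`, where the location function vanishes. -/
def gridCube (n d : ℕ) (δ : Fin d → ℝ) (a : ℕ → Fin d → ℕ) (g : ℤ) (k : Fin d → ℤ) :
    Set (Fin d → ℝ) :=
  HalfOpenCube d (fun i => δ i + (locFun n d a g.toNat i : ℝ) + (k i) * (n : ℝ) ^ g) ((n : ℝ) ^ g)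

/-- The index of the cube of sidelength `n ^ g` containing `y`. -/
noncomputable def gridIdx (n d : ℕ) (δ : Fin d → ℝ) (a : ℕ → Fin d → ℕ) (g : ℤ) (y : Fin d → ℝ)
    (i : Fin d) : ℤ :=
  ⌊(y i - δ i - (locFun n d a g.toNat i : ℝ)) / (n : ℝ) ^ g⌋

lemma mem_gridRep {n d : ℕ} {δ : Fin d → ℝ} {a : ℕ → Fin d → ℕ} {Q : Set (Fin d → ℝ)} :
    Q ∈ GridRep n d δ a ↔ ∃ g k, Q = gridCube n d δ a g k := by
  constructor
  · rintro (⟨m, k, rfl⟩ | ⟨j, k, hj, rfl⟩)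
    · refine ⟨-(m : ℤ), k, ?_⟩
      simp [gridCube, locFun]
    · refine ⟨j, k, ?_⟩
      simp [gridCube]
  · rintro ⟨g, k, rfl⟩
    rcases le_or_gt g 0 with hg | hg
    · left
      obtain ⟨m, rfl⟩ : ∃ m : ℕ, g = -(m : ℤ) := ⟨(-g).toNat, by omega⟩
      refine ⟨m, k, ?_⟩
      simp [gridCube, locFun]
    · right
      obtain ⟨j, rfl⟩ : ∃ j : ℕ, g = (j : ℤ) := ⟨g.toNat, by omega⟩
      refine ⟨j, k, by omega, ?_⟩
      simp [gridCube]

lemma mem_gridCube {n d : ℕ} (hn : 2 ≤ n) {δ : Fin d → ℝ} {a : ℕ → Fin d → ℕ} {g : ℤ}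
    {k : Fin d → ℤ} {y : Fin d → ℝ} :
    y ∈ gridCube n d δ a g k ↔ gridIdx n d δ a g y = k := by
  have hp : (0 : ℝ) < (n : ℝ) ^ g := by
    have : (0 : ℝ) < n := by exact_mod_cast (by omega : 0 < n)
    positivity
  rw [funext_iff]
  refine forall_congr' fun i => ?_
  rw [gridIdx, Int.floor_eq_iff, le_div_iff₀ hp, div_lt_iff₀ hp]
  refine and_congr ?_ ?_ <;> constructor <;> intro h <;> linarith

/-- The offset `ℒ_𝐚((g + 1)⁺) - ℒ_𝐚(g⁺)` is `n ^ g` times an integer: `a_g` when `g ≥ 0`, and zero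
when `g < 0`. -/
lemma exists_locFun_succ (n d : ℕ) (a : ℕ → Fin d → ℕ) (g : ℤ) (i : Fin d) :
    ∃ e : ℤ, (locFun n d a (g + 1).toNat i : ℝ) =
      (locFun n d a g.toNat i : ℝ) + (n : ℝ) ^ g * e := by
  rcases lt_or_ge g 0 with hg | hg
  · refine ⟨0, ?_⟩
    rw [show (g + 1).toNat = g.toNat by omega]
    simp
  · obtain ⟨j, rfl⟩ : ∃ j : ℕ, g = (j : ℤ) := ⟨g.toNat, by omega⟩
    refine ⟨a j i, ?_⟩
    rw [show ((j : ℤ) + 1).toNat = j + 1 by omega]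
    simp [locFun, Finset.sum_range_succ]

lemma gridIdx_succ {n d : ℕ} (hn : 2 ≤ n) (δ : Fin d → ℝ) (a : ℕ → Fin d → ℕ) (g : ℤ)
    (i : Fin d) :
    ∃ e : ℤ, ∀ y, gridIdx n d δ a (g + 1) y i = (gridIdx n d δ a g y i - e) / (n : ℤ) := by
  obtain ⟨e, he⟩ := exists_locFun_succ n d a g i
  refine ⟨e, fun y => ?_⟩
  have hn0 : (n : ℝ) ≠ 0 := by exact_mod_cast (by omega : n ≠ 0)
  have hp : (n : ℝ) ^ g ≠ 0 := zpow_ne_zero _ hn0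
  rw [gridIdx, gridIdx, ← Int.floor_sub_intCast, ← Int.floor_div_natCast, he, zpow_add_one₀ hn0]
  congr 1
  field_simp
  ring

/-- Points in a common cube of sidelength `n ^ g` lie in a common cube of each larger
sidelength. -/
lemma gridIdx_eq_of_le {n d : ℕ} (hn : 2 ≤ n) {δ : Fin d → ℝ} {a : ℕ → Fin d → ℕ} {g h : ℤ}
    (hgh : g ≤ h) {y z : Fin d → ℝ} (hyz : gridIdx n d δ a g y = gridIdx n d δ a g z) :
    gridIdx n d δ a h y = gridIdx n d δ a h z := by
  induction h, hgh using Int.leInduction with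
  | base => exact hyz
  | succ m _ ih =>
    funext i
    obtain ⟨e, he⟩ := gridIdx_succ hn δ a m i
    rw [he, he, ih]

lemma gridCube_subset {n d : ℕ} (hn : 2 ≤ n) {δ : Fin d → ℝ} {a : ℕ → Fin d → ℕ} {g h : ℤ}
    (hgh : g ≤ h) {k l : Fin d → ℤ} {y : Fin d → ℝ} (hk : y ∈ gridCube n d δ a g k)
    (hl : y ∈ gridCube n d δ a h l) : gridCube n d δ a g k ⊆ gridCube n d δ a h l := by
  intro z hz
  rw [mem_gridCube hn] at *
  rw [← hl]
  exact gridIdx_eq_of_le hn hgh (hz.trans hk.symm)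

lemma side_le_of_halfOpenCube_eq {d : ℕ} (hd : 1 ≤ d) {x x' : Fin d → ℝ} {s s' : ℝ} (hs : 0 < s)
    (hs' : 0 < s') (h : HalfOpenCube d x s = HalfOpenCube d x' s') : s' ≤ s := by
  have h1 : x' ∈ HalfOpenCube d x s := h ▸ fun i => ⟨le_rfl, by linarith⟩
  have h2 : x ∈ HalfOpenCube d x' s' := h ▸ fun i => ⟨le_rfl, by linarith⟩
  by_contra! hlt
  -- The corners agree, so `x + s • 1` lies in the second cube but on the excluded faces of the first.
  have h3 : (fun i => x i + s) ∈ HalfOpenCube d x s := by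
    rw [h]
    intro i
    have := (h1 i).1
    have := (h2 i).1
    constructor <;> dsimp only <;> linarith
  exact lt_irrefl _ (h3 ⟨0, hd⟩).2

/-- `𝒢(δ, ℒ_𝐚)` is an `n`-adic grid in `ℝ^d`. -/
theorem stmt8 (n d : ℕ) (hn : 2 ≤ n) (hd : 1 ≤ d)
    (δ : Fin d → ℝ) (a : ℕ → Fin d → ℕ) (ha : ∀ j s, a j s < n) :
    IsNAdicGrid n d (GridRep n d δ a) := by
  have hp : ∀ g : ℤ, (0 : ℝ) < (n : ℝ) ^ g := fun g => by
    have : (0 : ℝ) < n := by exact_mod_cast (by omega : 0 < n)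
    positivity
  refine ⟨?_, ?_, ?_⟩
  · intro Q hQ
    obtain ⟨g, k, rfl⟩ := mem_gridRep.1 hQ
    exact ⟨_, g, rfl⟩
  · intro Q hQ R hR
    obtain ⟨g, k, rfl⟩ := mem_gridRep.1 hQ
    obtain ⟨h, l, rfl⟩ := mem_gridRep.1 hR
    rcases Set.eq_empty_or_nonempty (gridCube n d δ a g k ∩ gridCube n d δ a h l) with
      he | ⟨y, hy, hy'⟩
    · exact Or.inr (Or.inr he)
    · rcases le_total g h with hgh | hgh
      · exact Or.inl (Set.inter_eq_left.2 (gridCube_subset hn hgh hy hy'))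
      · exact Or.inr (Or.inl (Set.inter_eq_right.2 (gridCube_subset hn hgh hy' hy)))
  · intro k y
    refine ⟨gridCube n d δ a k (gridIdx n d δ a k y),
      ⟨mem_gridRep.2 ⟨k, _, rfl⟩, ⟨_, rfl⟩, (mem_gridCube hn).2 rfl⟩, ?_⟩
    rintro Q ⟨hQ, ⟨x, hx⟩, hy⟩
    obtain ⟨g, l, rfl⟩ := mem_gridRep.1 hQ
    have hside : (n : ℝ) ^ g = (n : ℝ) ^ k :=
      le_antisymm (side_le_of_halfOpenCube_eq hd (hp k) (hp g) hx.symm)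
        (side_le_of_halfOpenCube_eq hd (hp g) (hp k) hx)
    have hgk : g = k :=
      zpow_right_injective₀ (by exact_mod_cast (by omega : 0 < n))
        (by exact_mod_cast (by omega : n ≠ 1)) hside
    subst hgk
    rw [(mem_gridCube hn).1 hy]
end

section
/- Let n ≥ 2, d ≥ 1 be integers and suppose the n-adic grids 𝒢_i = 𝒢(δ_i, ℒ_{𝐚_i}) in ℝ^d, i = 1, …, d+1, are adjacent. Then δ_1, …, δ_{d+1} are separated: for every coordinate k ∈ {1,…,d} and all i ≠ j in {1,…,d+1}, the number (δ_i)_k − (δ_j)_k is not an integer. -/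
/-!
If two of the `d + 1` initial points, `δ i` and `δ j`, differ by an integer in the coordinate `k`,
then at every generation `m ≥ 0` their grids have the same faces orthogonal to the `k`-th axis.
One hyperplane `x k = δ i k` thus serves both grids, and the remaining `d - 1` grids can be matched
with the remaining `d - 1` coordinates. The resulting `d` hyperplanes meet in a point `p` lying on
a face of every grid at every generation `m ≥ 0`, so no cube of side at most `1`, in any of the
grids, contains a cube centred at `p` (`not_centred_cube_subset`). Small cubes centred at `p` are
therefore only covered by grid cubes of side at least `n`, contradicting adjacency.
-/

open scoped BigOperators

/-- Generation `m ≥ 0` of a grid based at `b` has an orthogonal face through every point `p` with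
`p c - b c ∈ ℤ`, so none of its cubes contains a cube centred at `p`. -/
lemma not_centred_cube_subset {n d : ℕ} (hn : 2 ≤ n) (b p : Fin d → ℝ) (c : Fin d) (w : ℤ)
    (hw : p c - b c = w) {l : ℝ} (hl : 0 < l) (m : ℕ) (q : Fin d → ℤ) :
    ¬ HalfOpenCube d (fun s => p s - l / 2) l ⊆
      HalfOpenCube d (fun s => b s + (q s) * (n : ℝ) ^ (-(m : ℤ))) ((n : ℝ) ^ (-(m : ℤ))) := by
  intro hsub
  have h1 := (@hsub (fun s => p s - l / 2)
    (fun s => ⟨le_rfl, by dsimp only; linarith⟩) c).1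
  have h2 := (@hsub p
    (fun s => ⟨by dsimp only; linarith, by dsimp only; linarith⟩) c).2
  dsimp only at h1 h2
  have hN : (0 : ℝ) < (n : ℝ) ^ m := by positivity
  rw [zpow_neg, zpow_natCast] at h1 h2
  have hlow : (q c : ℝ) * ((n : ℝ) ^ m)⁻¹ < w := by linarith
  have hupp : (w : ℝ) < ((q c : ℝ) + 1) * ((n : ℝ) ^ m)⁻¹ := by linarith
  rw [← div_eq_mul_inv, div_lt_iff₀ hN] at hlow
  rw [← div_eq_mul_inv, lt_div_iff₀ hN] at hupp
  have hlow' : q c < w * (n : ℤ) ^ m := by exact_mod_cast hlow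
  have hupp' : w * (n : ℤ) ^ m < q c + 1 := by exact_mod_cast hupp
  omega

/-- A cube of side at least `1` cannot be rewritten as a cube of side at most `1 / 2`; the
coordinate `c` rules out dimension `0`, where all cubes coincide. -/
lemma cube_ne_of_side {d : ℕ} (c : Fin d) (x y : Fin d → ℝ) {L s : ℝ} (hL : 1 ≤ L)
    (hs : s ≤ 1 / 2) : HalfOpenCube d x L ≠ HalfOpenCube d y s := by
  intro h
  have hx : x ∈ HalfOpenCube d x L := fun t => ⟨le_rfl, by linarith⟩
  have hx' : (fun t => x t + 1 / 2) ∈ HalfOpenCube d x L :=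
    fun t => ⟨by dsimp only; linarith, by dsimp only; linarith⟩
  rw [h] at hx hx'
  have h1 := (hx c).1
  have h2 := (hx' c).2
  dsimp only at h2
  linarith

/-- (Lemma 6.4) If the `d+1` grids `𝒢(δ_i, ℒ_{𝐚_i})` are adjacent then the initial points
are separated: no coordinate difference `(δ_i)_k − (δ_j)_k` (for `i ≠ j`) is an integer. -/
theorem stmt10 (n d : ℕ) (hn : 2 ≤ n) (hd : 1 ≤ d)
    (δ : Fin (d + 1) → Fin d → ℝ) (a : Fin (d + 1) → ℕ → Fin d → ℕ)
    (ha : ∀ i j s, a i j s < n)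
    (hadj : IsAdjacentFamily n d (d + 1) (fun i => GridRep n d (δ i) (a i))) :
    ∀ k : Fin d, ∀ i j : Fin (d + 1), i ≠ j → ∀ z : ℤ, δ i k - δ j k ≠ (z : ℝ) := by
  intro k i j hij z hz
  obtain ⟨C, hC, hadj⟩ := hadj
  -- `succAbove` matches the `d` coordinates with the grids other than `j`; the transposition
  -- makes `k` correspond to `i`.
  obtain ⟨k₀, hk₀⟩ := Fin.exists_succAbove_eq hij
  let p : Fin d → ℝ := fun c => δ (j.succAbove (Equiv.swap k k₀ c)) c
  have hp : ∀ g, ∃ c, ∃ w : ℤ, p c - δ g c = w := by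
    intro g
    by_cases hg : g = j
    · refine ⟨k, z, ?_⟩
      simp only [p, Equiv.swap_apply_left, hk₀, hg, hz]
    · obtain ⟨c₀, hc₀⟩ := Fin.exists_succAbove_eq hg
      refine ⟨Equiv.swap k k₀ c₀, 0, ?_⟩
      simp only [p, Equiv.swap_apply_self, hc₀, sub_self, Int.cast_zero]
  -- This side forces the covering cube to have side at most `1 / 2`.
  have hl : (0 : ℝ) < 1 / (2 * C) := by positivity
  obtain ⟨g, R, hR, hsub, y, s, hRy, hs⟩ := hadj (fun c => p c - 1 / (2 * C) / 2) _ hl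
  have hs' : s ≤ 1 / 2 := by
    have : C * (1 / (2 * C)) = 1 / 2 := by field_simp
    linarith
  obtain ⟨c, w, hw⟩ := hp g
  rcases hR with ⟨m, q, rfl⟩ | ⟨J, q, -, rfl⟩
  · exact not_centred_cube_subset hn (δ g) p c w hw hl m q hsub
  · exact cube_ne_of_side c _ y (one_le_pow₀ (by exact_mod_cast (by omega : 1 ≤ n))) hs' hRy
end

section
/- Let n ≥ 2, d ≥ 1 be integers and let δ_1, …, δ_d ∈ ℝ^d satisfy: for all i ≠ j, all s ∈ {1,…,d}, and all integers m ≥ 0, (δ_i)_s − (δ_j)_s ∉ n^{−m}ℤ. For a permutation σ of {1,…,d} define δ_σ ∈ ℝ^d by (δ_σ)_i := (δ_{σ(i)})_i. Then for every integer m ≥ 0, ⋂_{i=1}^d b[𝒢(δ_i)_m] = ⋃_{σ ∈ S_d} { δ_σ + n^{−m} k : k ∈ ℤ^d }, where S_d is the symmetric group on {1,…,d}. -/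
/-! If `x` lies in every boundary set, choose for each grid `i` a coordinate `s i` on which `x` is
congruent to `δ i` modulo `n^{-m}`. If two distinct grids `i ≠ j` chose the same coordinate, then
subtracting the two congruences would contradict the separation hypothesis; so `s` is an injective
self-map of a finite set, hence a permutation, and `x` is a lattice point of `δ_σ` for
`σ = s⁻¹`. Conversely, a lattice point of `δ_σ` meets the boundary of the `i`-th grid along the
coordinate `σ⁻¹ i`. -/

/-- The union of the boundaries of the cubes of the `m`-th generation (`m ≥ 0`) of the grid
with initial point `δ`: the points having some coordinate congruent to the corresponding
coordinate of `δ` modulo `n^{-m}`. -/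
def bdryPos (n d : ℕ) (δ : Fin d → ℝ) (m : ℕ) : Set (Fin d → ℝ) :=
  {x | ∃ (s : Fin d) (k : ℤ), x s - δ s = (k : ℝ) * (n : ℝ) ^ (-(m : ℤ))}

/-- (Lemma 7.9) If `δ_1, …, δ_d ∈ ℝ^d` satisfy `(δ_i)_s − (δ_j)_s ∉ n^{−m}ℤ` for all `i ≠ j`,
`s` and `m ≥ 0`, then the small scale lattice `⋂_i b[𝒢(δ_i)_m]` equals the union over all
permutations `σ` of the translates of the lattice `n^{−m}ℤ^d` by the mixed points `δ_σ`,
where `(δ_σ)_i = (δ_{σ(i)})_i`. -/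
theorem stmt11 (n d : ℕ) (hn : 2 ≤ n) (hd : 1 ≤ d)
    (δ : Fin d → Fin d → ℝ)
    (hsep : ∀ i j : Fin d, i ≠ j → ∀ s : Fin d, ∀ (m : ℕ) (k : ℤ),
      δ i s - δ j s ≠ (k : ℝ) * (n : ℝ) ^ (-(m : ℤ))) :
    ∀ m : ℕ,
      (⋂ i : Fin d, bdryPos n d (δ i) m) =
        ⋃ σ : Equiv.Perm (Fin d),
          {x : Fin d → ℝ | ∃ k : Fin d → ℤ,
            x = fun i => δ (σ i) i + (k i : ℝ) * (n : ℝ) ^ (-(m : ℤ))} := by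
  intro m
  ext x
  simp only [Set.mem_iInter, Set.mem_iUnion, bdryPos, Set.mem_setOf_eq]
  constructor
  · intro h
    choose s k hk using h
    have hs : Function.Injective s := by
      intro i j hij
      by_contra hne
      apply hsep i j hne (s i) m (k j - k i)
      have hi := hk i
      have hj := hk j
      rw [← hij] at hj
      push_cast
      linarith
    let e : Equiv.Perm (Fin d) := Equiv.ofBijective s (Finite.injective_iff_bijective.mp hs)
    refine ⟨e.symm, fun t => k (e.symm t), ?_⟩
    funext t
    have ht := hk (e.symm t)
    have hst : s (e.symm t) = t := e.apply_symm_apply t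
    rw [hst] at ht
    linarith
  · rintro ⟨σ, k, rfl⟩ i
    refine ⟨σ.symm i, k (σ.symm i), ?_⟩
    simp
end
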